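/- arXiv:math/0703687 — 5 statements merged into one kernel-verified Lean document; each statement's English description precedes it below -/
import Mathlib

section
/- For all r in [0,1), K(r) > (9/(8+r²))·log(4/r'), where r' = √(1−r²). -/
noncomputable def ellK (r : ℝ) : ℝ :=
  ∫ θ in (0:ℝ)..(Real.pi/2), 1 / Real.sqrt (1 - r^2 * Real.sin θ ^ 2)

open Real Filter Topology Finset

/-- The Wallis product `(1 · 3 ⋯ (2n - 1)) / (2 · 4 ⋯ 2n)`. -/
noncomputable def wallisProd (n : ℕ) : ℝ :=
  ∏ i ∈ range n, (2 * (i : ℝ) + 1) / (2 * i + 2)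

theorem wallisProd_succ (n : ℕ) :
    wallisProd (n + 1) = wallisProd n * ((2 * (n : ℝ) + 1) / (2 * n + 2)) :=
  prod_range_succ _ _

theorem wallisProd_nonneg (n : ℕ) : 0 ≤ wallisProd n :=
  prod_nonneg fun _ _ => by positivity

theorem wallisProd_le_one (n : ℕ) : wallisProd n ≤ 1 :=
  prod_le_one (fun _ _ => by positivity) fun _ _ =>
    div_le_one_of_le₀ (by linarith) (by positivity)

theorem wallisProd_sq_mul_W (n : ℕ) :
    wallisProd n ^ 2 * ((2 * n + 1) * Wallis.W n) = 1 := by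
  induction n with
  | zero => simp [wallisProd, Wallis.W]
  | succ n ih =>
    rw [wallisProd_succ, Wallis.W_succ]
    refine Eq.trans ?_ ih
    push_cast
    field_simp
    ring

theorem ringChoose_eq_wallisProd (n : ℕ) :
    Ring.choose ((1 / 2 : ℝ) + n - 1) n = wallisProd n := by
  rw [← Ring.multichoose_eq]
  have h : ∀ n : ℕ, (ascPochhammer ℝ n).eval (1 / 2 : ℝ) = n.factorial * wallisProd n := by
    intro n
    induction n with
    | zero => simp [wallisProd]
    | succ n ih =>
      rw [ascPochhammer_succ_eval, ih, wallisProd_succ, Nat.factorial_succ]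
      push_cast
      field_simp
      ring
  have h₁ := Ring.factorial_nsmul_multichoose_eq_ascPochhammer (1 / 2 : ℝ) n
  rw [Polynomial.ascPochhammer_smeval_eq_eval, h, nsmul_eq_mul] at h₁
  exact mul_left_cancel₀ (by positivity) h₁

theorem hasSum_wallisProd_mul_pow {x : ℝ} (hx : |x| < 1) :
    HasSum (fun n => wallisProd n * x ^ n) (1 / √(1 - x)) := by
  have h := (one_div_one_sub_rpow_hasFPowerSeriesOnBall_zero (1 / 2)).hasSum
    (y := x) (by simpa [enorm_eq_nnnorm] using! hx)
  simp only [ringChoose_eq_wallisProd, zero_add, ← sqrt_eq_rpow,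
    FormalMultilinearSeries.ofScalars_apply_eq, smul_eq_mul] at h
  exact h

theorem integral_sin_pow_even_zero_pi_div_two (n : ℕ) :
    ∫ θ in (0 : ℝ)..π / 2, sin θ ^ (2 * n) = π / 2 * wallisProd n := by
  have h := intervalIntegral.integral_comp_sub_left (a := 0) (b := π / 2)
    (fun θ => cos θ ^ (2 * n)) (π / 2)
  simp only [cos_pi_div_two_sub, sub_self, sub_zero] at h
  rw [h, EulerSine.integral_cos_pow_eq, integral_sin_pow_even, wallisProd]
  ring

theorem sq_mul_sin_sq_le (r θ : ℝ) : r ^ 2 * sin θ ^ 2 ≤ r ^ 2 :=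
  mul_le_of_le_one_right (sq_nonneg r) (sin_sq_le_one θ)

theorem hasSum_ellK {r : ℝ} (hr : r ^ 2 < 1) :
    HasSum (fun n => π / 2 * wallisProd n ^ 2 * (r ^ 2) ^ n) (ellK r) := by
  have h := intervalIntegral.hasSum_integral_of_dominated_convergence
    (μ := MeasureTheory.volume) (a := 0) (b := π / 2)
    (F := fun n θ => wallisProd n * (r ^ 2 * sin θ ^ 2) ^ n)
    (f := fun θ => 1 / √(1 - r ^ 2 * sin θ ^ 2))
    (fun n _ => (r ^ 2) ^ n) (fun n => by fun_prop)
    (fun n => .of_forall fun θ _ => by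
      rw [norm_of_nonneg (mul_nonneg (wallisProd_nonneg n) (by positivity))]
      refine (mul_le_of_le_one_left (by positivity) (wallisProd_le_one n)).trans ?_
      exact pow_le_pow_left₀ (by positivity) (sq_mul_sin_sq_le r θ) n)
    (.of_forall fun θ _ => summable_geometric_of_lt_one (sq_nonneg r) hr)
    (by simp)
    (.of_forall fun θ _ => hasSum_wallisProd_mul_pow (by
      rw [abs_of_nonneg (by positivity)]
      exact (sq_mul_sin_sq_le r θ).trans_lt hr))
  have hcoeff (n : ℕ) : ∫ θ in (0 : ℝ)..π / 2, wallisProd n * (r ^ 2 * sin θ ^ 2) ^ n =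
      π / 2 * wallisProd n ^ 2 * (r ^ 2) ^ n := by
    simp_rw [mul_pow, ← pow_mul (sin _)]
    rw [intervalIntegral.integral_const_mul, intervalIntegral.integral_const_mul,
      integral_sin_pow_even_zero_pi_div_two]
    ring
  simp_rw [hcoeff] at h
  exact h

theorem log_le_ellK {s : ℝ} (hs : 0 ≤ s) (hs1 : s < 1) :
    log (2 * (1 + s) / √(1 - s ^ 2)) ≤ ellK s := by
  have hs2 : 0 < 1 - s ^ 2 := by nlinarith
  set k := √(1 - s ^ 2) with hk
  have hk0 : 0 < k := sqrt_pos.2 hs2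
  have hk2 : k ^ 2 = 1 - s ^ 2 := sq_sqrt hs2.le
  have hpos : ∀ θ, 0 < 1 - s ^ 2 * sin θ ^ 2 := fun θ => by
    linarith [sq_mul_sin_sq_le s θ]
  have hsin : ∀ θ ∈ Set.Icc 0 (π / 2), 0 ≤ sin θ := fun θ hθ =>
    sin_nonneg_of_nonneg_of_le_pi hθ.1 (by linarith [hθ.2, pi_pos])
  have hcont : Continuous fun θ => 1 / √(1 - s ^ 2 * sin θ ^ 2) :=
    continuous_const.div (by fun_prop) fun θ => (sqrt_pos.2 (hpos θ)).ne'
  have hder : ∀ θ ∈ Set.Icc 0 (π / 2),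
      HasDerivAt (fun θ => log (1 + sin θ) - arsinh (s * cos θ / k))
        (cos θ / (1 + sin θ) + s * sin θ / √(1 - s ^ 2 * sin θ ^ 2)) θ := by
    intro θ hθ
    have h₁ := ((hasDerivAt_sin θ).const_add 1).log (by linarith [hsin θ hθ])
    have h₂ := (((hasDerivAt_cos θ).const_mul s).div_const k).arsinh
    refine (h₁.sub h₂).congr_deriv ?_
    have : √(1 + (s * cos θ / k) ^ 2) = √(1 - s ^ 2 * sin θ ^ 2) / k := by
      rw [← sqrt_sq hk0.le, ← sqrt_div (hpos θ).le, sqrt_sq hk0.le]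
      congr 1
      field_simp
      rw [hk2, cos_sq']
      ring
    rw [this, smul_eq_mul]
    have := (sqrt_pos.2 (hpos θ)).ne'
    field_simp
    ring
  have hle : ∀ θ ∈ Set.Icc 0 (π / 2),
      cos θ / (1 + sin θ) + s * sin θ / √(1 - s ^ 2 * sin θ ^ 2) ≤
        1 / √(1 - s ^ 2 * sin θ ^ 2) := by
    intro θ hθ
    have hu := hsin θ hθ
    have hu1 := sin_le_one θ
    have hc : 0 ≤ cos θ := cos_nonneg_of_mem_Icc ⟨by linarith [hθ.1, pi_pos], hθ.2⟩
    have hsu : s * sin θ ≤ 1 := by nlinarith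
    have hR := sqrt_pos.2 (hpos θ)
    have hmain : cos θ * √(1 - s ^ 2 * sin θ ^ 2) ≤ (1 - s * sin θ) * (1 + sin θ) := by
      refine abs_le_of_sq_le_sq' ?_ (by nlinarith) |>.2
      rw [mul_pow, sq_sqrt (hpos θ).le, cos_sq']
      have : 0 ≤ (1 - s * sin θ) * (1 + sin θ) * (2 * sin θ * (1 - s)) :=
        mul_nonneg (mul_nonneg (by linarith) (by linarith))
          (mul_nonneg (by linarith) (by linarith))
      linarith
    rw [← le_sub_iff_add_le, ← sub_div, div_le_div_iff₀ (by linarith) hR]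
    exact hmain
  have h := intervalIntegral.sub_le_integral_of_hasDeriv_right_of_le
    (by positivity : (0 : ℝ) ≤ π / 2)
    (fun θ hθ => (hder θ hθ).continuousAt.continuousWithinAt)
    (fun θ hθ => (hder θ (Set.Ioo_subset_Icc_self hθ)).hasDerivWithinAt)
    hcont.continuousOn.integrableOn_Icc
    (fun θ hθ => hle θ (Set.Ioo_subset_Icc_self hθ))
  refine le_trans (le_of_eq ?_) h
  have h1 : √(1 + (s / k) ^ 2) = 1 / k := by
    rw [← sqrt_sq (by positivity : 0 ≤ 1 / k)]
    congr 1
    field_simp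
    rw [hk2]
    ring
  simp only [sin_pi_div_two, cos_pi_div_two, sin_zero, cos_zero, mul_zero, zero_div, mul_one,
    add_zero, log_one, zero_sub, sub_neg_eq_add, arsinh, h1]
  norm_num
  rw [← log_mul (by norm_num) (by positivity)]
  congr 1
  field_simp
  ring

theorem ellKDiff_ge {s : ℝ} (hs : 0 ≤ s) (hs1 : s < 1) :
    9 * log ((1 + s) / 2) - 4 * √(1 - s ^ 2) ≤
      (8 + s ^ 2) * ellK s - 9 * log (4 / √(1 - s ^ 2)) := by
  have hs2 : 0 < 1 - s ^ 2 := by nlinarith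
  have h := log_le_ellK hs hs1
  set k := √(1 - s ^ 2) with hk
  have hk0 : 0 < k := sqrt_pos.2 hs2
  have hk2 : k ^ 2 = 1 - s ^ 2 := sq_sqrt hs2.le
  have hsplit : log (2 * (1 + s) / k) = log (4 / k) + log ((1 + s) / 2) := by
    rw [← log_mul (by positivity) (by positivity)]
    congr 1
    field_simp
    ring
  have hneg : log ((1 + s) / 2) ≤ 0 := log_nonpos (by linarith) (by linarith)
  have hlog : k ^ 2 * log (4 / k) ≤ 4 * k := by
    calc k ^ 2 * log (4 / k) ≤ k ^ 2 * (4 / k) := by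
          gcongr
          exact log_le_self (by positivity)
      _ = 4 * k := by field_simp
  rw [hsplit] at h
  have := mul_le_mul_of_nonneg_left h (by positivity : 0 ≤ 8 + s ^ 2)
  have := mul_nonneg_of_nonpos_of_nonpos (by linarith : -(1 - s ^ 2) ≤ 0) hneg
  rw [hk2] at hlog
  linarith

theorem wallisProd_bound {n : ℕ} (hn : 1 ≤ n) :
    π / 2 * (8 * wallisProd (n + 1) ^ 2 + wallisProd n ^ 2) ≤ 9 / 2 * (1 / ((n : ℝ) + 1)) := by
  set q : ℕ → ℝ := fun n => (n + 1) * (8 * wallisProd (n + 1) ^ 2 + wallisProd n ^ 2) with hq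
  have hq_eq (n : ℕ) : q n = wallisProd n ^ 2 * ((9 * n ^ 2 + 10 * n + 3) / (n + 1)) := by
    simp only [hq, wallisProd_succ]
    field_simp
    ring
  have hmono (n : ℕ) (hn : 1 ≤ n) : q n ≤ q (n + 1) := by
    rw [hq_eq, hq_eq, wallisProd_succ, mul_pow, mul_assoc]
    refine mul_le_mul_of_nonneg_left ?_ (sq_nonneg _)
    have hn' : (1 : ℝ) ≤ n := by exact_mod_cast hn
    push_cast
    rw [div_pow, div_mul_div_comm, div_le_div_iff₀ (by positivity) (by positivity)]
    nlinarith [mul_nonneg (by positivity : 0 ≤ (n : ℝ) + 1)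
      (by nlinarith : (0 : ℝ) ≤ 5 * n ^ 2 - 3)]
  have hub (n : ℕ) : q n ≤ (9 + 3 * (1 / ((n : ℝ) + 1))) / π := by
    have hW := Wallis.le_W n
    have ha := wallisProd_sq_mul_W n
    have hle : wallisProd n ^ 2 ≤ 4 * (n + 1) / ((2 * n + 1) ^ 2 * π) := by
      rw [le_div_iff₀ (by positivity)]
      have := mul_le_mul_of_nonneg_left hW
        (by positivity : 0 ≤ wallisProd n ^ 2 * (2 * (n : ℝ) + 1) * (4 * (n + 1)))
      calc _ = wallisProd n ^ 2 * (2 * (n : ℝ) + 1) * (4 * (n + 1)) *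
            ((2 * n + 1) / (2 * n + 2) * (π / 2)) := by field_simp; ring
        _ ≤ _ := this
        _ = 4 * (n + 1) * (wallisProd n ^ 2 * ((2 * n + 1) * Wallis.W n)) := by ring
        _ = _ := by rw [ha, mul_one]
    rw [hq_eq]
    refine (mul_le_mul_of_nonneg_right hle (by positivity)).trans ?_
    rw [div_mul_div_comm, div_le_div_iff₀ (by positivity) pi_pos]
    have : (0 : ℝ) ≤ n := n.cast_nonneg
    field_simp
    nlinarith
  have hlim : Tendsto (fun n : ℕ => (9 + 3 * (1 / ((n : ℝ) + 1))) / π) atTop (𝓝 (9 / π)) := by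
    simpa using
      ((tendsto_one_div_add_atTop_nhds_zero_nat (𝕜 := ℝ)).const_mul 3 |>.const_add 9).div_const π
  have hle : q n ≤ 9 / π := by
    refine ge_of_tendsto hlim ?_
    filter_upwards [eventually_ge_atTop n] with m hm
    refine le_trans ?_ (hub m)
    induction m, hm using Nat.le_induction with
    | base => exact le_rfl
    | succ k hk ih => exact ih.trans (hmono k (hn.trans hk))
  rw [le_div_iff₀ pi_pos] at hle
  simp only [hq] at hle
  rw [mul_one_div, le_div_iff₀ (by positivity)]
  linarith

/-- The power series coefficients, in `r ^ 2`, of `(8 + r ^ 2) * K(r) - 9 * log (4 / √(1 - r ^ 2))`. -/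
noncomputable def ellKDiffCoeff : ℕ → ℝ
  | 0 => 4 * π - 9 * log 4
  | n + 1 => π / 2 * (8 * wallisProd (n + 1) ^ 2 + wallisProd n ^ 2) - 9 / 2 * (1 / ((n : ℝ) + 1))

theorem ellKDiffCoeff_zero_pos : 0 < ellKDiffCoeff 0 := by
  have h : log 4 = 2 * log 2 := by
    rw [show (4 : ℝ) = 2 ^ 2 by norm_num, log_pow]
    norm_num
  rw [ellKDiffCoeff, h]
  linarith [log_two_lt_d9, pi_gt_d2]

theorem ellKDiffCoeff_nonpos (n : ℕ) : ellKDiffCoeff (n + 2) ≤ 0 :=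
  sub_nonpos.2 (wallisProd_bound (by omega))

theorem hasSum_ellKDiff {r : ℝ} (hr : r ^ 2 < 1) :
    HasSum (fun n => ellKDiffCoeff n * (r ^ 2) ^ n)
      ((8 + r ^ 2) * ellK r - 9 * log (4 / √(1 - r ^ 2))) := by
  have hK := hasSum_ellK hr
  have hL := hasSum_pow_div_log_of_abs_lt_one (x := r ^ 2) (by rwa [abs_of_nonneg (sq_nonneg r)])
  have hpos : 0 < 1 - r ^ 2 := by linarith
  have hK' := (hasSum_nat_add_iff' 1).2 hK
  have h := ((hK'.mul_left 8).add (hK.mul_left (r ^ 2))).sub (hL.mul_left (9 / 2))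
  rw [← hasSum_nat_add_iff' 1]
  convert h using 1
  · ext n
    simp only [ellKDiffCoeff]
    ring
  · rw [log_div (by norm_num) (sqrt_pos.2 hpos).ne', log_sqrt hpos.le]
    simp [ellKDiffCoeff, wallisProd]
    ring

/-- A power series whose coefficients beyond the linear one are nonpositive is concave; this is
the resulting chord inequality, with the constant coefficient kept apart. -/
theorem chord_le_of_hasSum {d : ℕ → ℝ} (hd : ∀ n, d (n + 2) ≤ 0) {x y fx fy : ℝ}
    (hx : 0 ≤ x) (hxy : x ≤ y) (hfx : HasSum (fun n => d n * x ^ n) fx)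
    (hfy : HasSum (fun n => d n * y ^ n) fy) :
    d 0 * (y - x) + x * fy ≤ y * fx := by
  have h := (hasSum_nat_add_iff' 2).2 ((hfx.mul_left y).sub (hfy.mul_left x))
  have hnn := h.nonneg fun n => by
    have h1 : x ^ (n + 1) ≤ y ^ (n + 1) := pow_le_pow_left₀ hx hxy _
    have h2 := mul_nonneg (mul_nonneg hx (hx.trans hxy))
      (mul_nonneg (neg_nonneg.2 (hd n)) (sub_nonneg.2 h1))
    calc 0 ≤ _ := h2
      _ = _ := by ring
  simp only [sum_range_succ, range_zero, sum_empty, pow_zero, pow_one] at hnn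
  linarith

theorem ellK_lower (r : ℝ) (hr : r ∈ Set.Ico (0:ℝ) 1) :
    ellK r > (9 / (8 + r^2)) * Real.log (4 / Real.sqrt (1 - r^2)) := by
  obtain ⟨h0, h1⟩ := hr
  have hr2 : r ^ 2 < 1 := by nlinarith
  set D := (8 + r ^ 2) * ellK r - 9 * log (4 / √(1 - r ^ 2)) with hD
  have hbound : ∀ᶠ s in 𝓝[<] (1 : ℝ), ellKDiffCoeff 0 * (s ^ 2 - r ^ 2) +
      r ^ 2 * (9 * log ((1 + s) / 2) - 4 * √(1 - s ^ 2)) ≤ s ^ 2 * D := by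
    filter_upwards [Ioo_mem_nhdsLT h1] with s hs
    have hs0 : 0 ≤ s := h0.trans hs.1.le
    have hs2 : s ^ 2 < 1 := by nlinarith [hs.2]
    refine le_trans ?_ (chord_le_of_hasSum ellKDiffCoeff_nonpos (sq_nonneg r)
      (pow_le_pow_left₀ h0 hs.1.le 2) (hasSum_ellKDiff hr2) (hasSum_ellKDiff hs2))
    linarith [mul_le_mul_of_nonneg_left (ellKDiff_ge hs0 hs.2) (sq_nonneg r)]
  have hleft : ContinuousAt (fun s : ℝ => ellKDiffCoeff 0 * (s ^ 2 - r ^ 2) +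
      r ^ 2 * (9 * log ((1 + s) / 2) - 4 * √(1 - s ^ 2))) 1 := by
    fun_prop (disch := norm_num)
  have hright : ContinuousAt (fun s : ℝ => s ^ 2 * D) 1 := by fun_prop
  have hle := le_of_tendsto_of_tendsto (hleft.tendsto.mono_left nhdsWithin_le_nhds)
    (hright.tendsto.mono_left nhdsWithin_le_nhds) hbound
  norm_num at hle
  have hDpos : 0 < D := lt_of_lt_of_le (mul_pos ellKDiffCoeff_zero_pos (by linarith)) hle
  rw [gt_iff_lt, div_mul_eq_mul_div, div_lt_iff₀ (by positivity)]
  linarith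
end

section
/- For all r in [0,1), K(r) < (4/(3+r²))·log(4/r'), where r' = √(1−r²). -/
/-- The second Taylor polynomial bounds `1 / √(1 + y)` from above. -/
lemma one_div_sqrt_one_add_le {y : ℝ} (hy : 0 ≤ y) :
    1 / √(1 + y) ≤ 1 - y / 2 + 3 / 8 * y ^ 2 := by
  have hP : 0 < 1 - y / 2 + 3 / 8 * y ^ 2 := by nlinarith [sq_nonneg (y - 2 / 3)]
  rw [div_le_iff₀ (by positivity), ← div_le_iff₀' hP]
  apply Real.le_sqrt_of_sq_le
  rw [div_pow, div_le_iff₀ (by positivity)]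
  have h : 0 ≤ y ^ 3 * (5 / 8 - 15 / 64 * y + 9 / 64 * y ^ 2) :=
    mul_nonneg (by positivity) (by nlinarith [sq_nonneg (y - 5 / 6)])
  nlinarith

/-- A primitive of `u ↦ (1 - k²u²/2 + 3k⁴u⁴/8) / √(1 + u²)`. -/
noncomputable def ellKMajorant (k u : ℝ) : ℝ :=
  (1 + k ^ 2 / 4 + 9 * k ^ 4 / 64) * Real.arsinh u +
    √(1 + u ^ 2) * ((-(k ^ 2) / 4 - 9 * k ^ 4 / 64) * u + 3 * k ^ 4 / 32 * u ^ 3)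

lemma ellKMajorant_zero (k : ℝ) : ellKMajorant k 0 = 0 := by
  simp [ellKMajorant]

lemma hasDerivAt_ellKMajorant (k u : ℝ) :
    HasDerivAt (ellKMajorant k)
      ((1 - (k * u) ^ 2 / 2 + 3 / 8 * ((k * u) ^ 2) ^ 2) / √(1 + u ^ 2)) u := by
  have hpos : (0 : ℝ) < 1 + u ^ 2 := by positivity
  have h1 := (Real.hasDerivAt_arsinh u).const_mul (1 + k ^ 2 / 4 + 9 * k ^ 4 / 64)
  have h2 := (((hasDerivAt_id u).pow 2).const_add 1).sqrt (by simpa using hpos.ne')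
  have h3 := ((hasDerivAt_id u).const_mul (-(k ^ 2) / 4 - 9 * k ^ 4 / 64)).add
    (((hasDerivAt_id u).pow 3).const_mul (3 * k ^ 4 / 32))
  refine (h1.add (h2.mul h3)).congr_deriv ?_
  have hs : √(1 + u ^ 2) ≠ 0 := by positivity
  have hs2 : √(1 + u ^ 2) ^ 2 = 1 + u ^ 2 := Real.sq_sqrt hpos.le
  simp
  field_simp
  rw [hs2]
  ring

lemma continuous_one_div_sqrt_quadratic {a b : ℝ} (ha : 0 < a) (hb : 0 < b) :
    Continuous fun θ : ℝ => 1 / √(a * Real.cos θ ^ 2 + b * Real.sin θ ^ 2) := by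
  refine continuous_const.div (by fun_prop) fun θ => ?_
  have : 0 < a * Real.cos θ ^ 2 + b * Real.sin θ ^ 2 := by
    rcases lt_or_ge 0 (Real.cos θ ^ 2) with h | h
    · positivity
    · have := Real.sin_sq_add_cos_sq θ
      have : 0 < Real.sin θ ^ 2 := by linarith
      positivity
  positivity

/-- Comparison of an integral over `[0, arctan x]` with a function of `tan`. -/
lemma integral_arctan_le {f F F' : ℝ → ℝ} {c x : ℝ} (hx : 0 ≤ x) (hf : Continuous f)
    (hF : ∀ u, HasDerivAt F (F' u) u) (hF0 : F 0 = 0)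
    (hle : ∀ θ, 0 < Real.cos θ → f θ ≤ F' (Real.tan θ / c) * (1 / Real.cos θ ^ 2 / c)) :
    ∫ θ in (0 : ℝ)..Real.arctan x, f θ ≤ F (x / c) := by
  have h0 : 0 ≤ Real.arctan x := Real.arctan_nonneg.2 hx
  have hcos : ∀ θ ∈ Set.Icc 0 (Real.arctan x), 0 < Real.cos θ := fun θ hθ =>
    Real.cos_pos_of_mem_Ioo ⟨by linarith [hθ.1, Real.pi_pos],
      hθ.2.trans_lt (Real.arctan_lt_pi_div_two x)⟩
  have hd : ∀ θ ∈ Set.Icc 0 (Real.arctan x), HasDerivAt (fun θ => F (Real.tan θ / c))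
      (F' (Real.tan θ / c) * (1 / Real.cos θ ^ 2 / c)) θ := fun θ hθ =>
    (hF _).comp θ ((Real.hasDerivAt_tan (hcos θ hθ).ne').div_const c)
  have := intervalIntegral.integral_le_sub_of_hasDeriv_right_of_le h0
    (fun θ hθ => (hd θ hθ).continuousAt.continuousWithinAt)
    (fun θ hθ => (hd θ (Set.Ioo_subset_Icc_self hθ)).hasDerivWithinAt)
    hf.integrableOn_Icc
    (fun θ hθ => hle θ (hcos θ (Set.Ioo_subset_Icc_self hθ)))
  simpa [hF0] using this

lemma one_add_tan_sq_eq {θ : ℝ} (h : 0 < Real.cos θ) :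
    1 + Real.tan θ ^ 2 = 1 / Real.cos θ ^ 2 := by
  rw [Real.tan_eq_sin_div_cos]
  field_simp
  linarith [Real.sin_sq_add_cos_sq θ]

lemma integral_lower_le {k x : ℝ} (hk : 0 < k) (hx : 0 ≤ x) :
    ∫ θ in (0 : ℝ)..Real.arctan x, 1 / √(1 * Real.cos θ ^ 2 + k ^ 2 * Real.sin θ ^ 2) ≤
      ellKMajorant k x := by
  have := integral_arctan_le (c := 1) hx
    (continuous_one_div_sqrt_quadratic one_pos (pow_pos hk 2))
    (hasDerivAt_ellKMajorant k) (ellKMajorant_zero k) ?_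
  · simpa using this
  intro θ h
  have e : 1 * Real.cos θ ^ 2 + k ^ 2 * Real.sin θ ^ 2 =
      Real.cos θ ^ 2 * (1 + (k * Real.tan θ) ^ 2) := by
    rw [Real.tan_eq_sin_div_cos]; field_simp
  have hb := one_div_sqrt_one_add_le (sq_nonneg (k * Real.tan θ))
  rw [div_one, div_one, e, Real.sqrt_mul (by positivity), Real.sqrt_sq h.le,
    one_add_tan_sq_eq h, Real.sqrt_div one_pos.le, Real.sqrt_sq h.le, Real.sqrt_one]
  calc _ = 1 / √(1 + (k * Real.tan θ) ^ 2) * (1 / Real.cos θ) := by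
        rw [one_div_mul_one_div, mul_comm]
    _ ≤ (1 - (k * Real.tan θ) ^ 2 / 2 + 3 / 8 * ((k * Real.tan θ) ^ 2) ^ 2) *
        (1 / Real.cos θ) := by gcongr
    _ = _ := by field_simp

lemma integral_upper_le {k x : ℝ} (hk : 0 < k) (hx : 0 ≤ x) :
    ∫ θ in (0 : ℝ)..Real.arctan x, 1 / √(k ^ 2 * Real.cos θ ^ 2 + 1 * Real.sin θ ^ 2) ≤
      ellKMajorant k (x / k) := by
  refine integral_arctan_le hx
    (continuous_one_div_sqrt_quadratic (pow_pos hk 2) one_pos)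
    (hasDerivAt_ellKMajorant k) (ellKMajorant_zero k) ?_
  intro θ h
  have e : k ^ 2 * Real.cos θ ^ 2 + 1 * Real.sin θ ^ 2 =
      (k * Real.cos θ) ^ 2 * (1 + (Real.tan θ / k) ^ 2) := by
    rw [Real.tan_eq_sin_div_cos]; field_simp
  have hb := one_div_sqrt_one_add_le (sq_nonneg (Real.tan θ))
  rw [one_add_tan_sq_eq h, Real.sqrt_div one_pos.le, Real.sqrt_sq h.le, Real.sqrt_one,
    one_div_one_div] at hb
  rw [e, Real.sqrt_mul (by positivity), Real.sqrt_sq (by positivity), mul_div_cancel₀ _ hk.ne']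
  have hs : 0 < √(1 + (Real.tan θ / k) ^ 2) := by positivity
  calc _ = Real.cos θ / (k * Real.cos θ ^ 2 * √(1 + (Real.tan θ / k) ^ 2)) := by
        field_simp
    _ ≤ (1 - Real.tan θ ^ 2 / 2 + 3 / 8 * (Real.tan θ ^ 2) ^ 2) /
        (k * Real.cos θ ^ 2 * √(1 + (Real.tan θ / k) ^ 2)) := by gcongr
    _ = _ := by field_simp

lemma ellK_le_majorant {r k : ℝ} (hk : 0 < k) (hrk : r ^ 2 = 1 - k ^ 2) :
    ellK r ≤ 2 * ellKMajorant k (1 / √k) := by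
  have hc := continuous_one_div_sqrt_quadratic one_pos (pow_pos hk 2)
  have e : ellK r = ∫ θ in (0 : ℝ)..(Real.pi / 2),
      1 / √(1 * Real.cos θ ^ 2 + k ^ 2 * Real.sin θ ^ 2) := by
    unfold ellK
    congr 1; ext θ; congr 2
    rw [hrk]; linarith [Real.sin_sq_add_cos_sq θ]
  have hsk : 0 < √k := Real.sqrt_pos.2 hk
  have ha : Real.pi / 2 - Real.arctan (1 / √k) = Real.arctan √k := by
    rw [one_div, Real.arctan_inv_of_pos hsk]; ring
  have h2 : ∫ θ in Real.arctan (1 / √k)..(Real.pi / 2),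
      1 / √(1 * Real.cos θ ^ 2 + k ^ 2 * Real.sin θ ^ 2) =
      ∫ θ in (0 : ℝ)..Real.arctan √k, 1 / √(k ^ 2 * Real.cos θ ^ 2 + 1 * Real.sin θ ^ 2) := by
    have := intervalIntegral.integral_comp_sub_left (a := 0) (b := Real.arctan √k)
      (fun θ => 1 / √(1 * Real.cos θ ^ 2 + k ^ 2 * Real.sin θ ^ 2)) (Real.pi / 2)
    rw [sub_zero, ← ha, sub_sub_cancel] at this
    rw [← this, ha]
    congr 1; ext θ
    rw [Real.cos_pi_div_two_sub, Real.sin_pi_div_two_sub, add_comm]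
  have hu := integral_upper_le hk hsk.le
  rw [Real.sqrt_div_self'] at hu
  rw [e, ← intervalIntegral.integral_add_adjacent_intervals
    (hc.intervalIntegrable 0 (Real.arctan (1 / √k))) (hc.intervalIntegrable _ _), h2]
  linarith [integral_lower_le hk (show 0 ≤ 1 / √k by positivity)]

lemma two_mul_ellKMajorant {k : ℝ} (hk : 0 < k) :
    2 * ellKMajorant k (1 / √k) =
      (1 + k ^ 2 / 4 + 9 * k ^ 4 / 64) * (2 * Real.log (1 + √(1 + k)) - Real.log k) +
        √(1 + k) * (-k / 2 + 3 * k ^ 2 / 16 - 9 * k ^ 3 / 32) := by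
  have hsk : 0 < √k := Real.sqrt_pos.2 hk
  have hsq : √k ^ 2 = k := Real.sq_sqrt hk.le
  have e : √(1 + (1 / √k) ^ 2) = √(1 + k) / √k := by
    rw [← Real.sqrt_div (by positivity), div_pow, hsq]
    congr 1; field_simp; ring
  have hl : Real.arsinh (1 / √k) = Real.log (1 + √(1 + k)) - Real.log k / 2 := by
    rw [Real.arsinh, e, ← add_div, Real.log_div (by positivity) hsk.ne', Real.log_sqrt hk.le]
  rw [ellKMajorant, hl, e]
  have h4 : √k ^ 4 = k ^ 2 := by rw [show √k ^ 4 = (√k ^ 2) ^ 2 by ring, hsq]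
  have : √(1 + k) / √k * ((-(k ^ 2) / 4 - 9 * k ^ 4 / 64) * (1 / √k) +
      3 * k ^ 4 / 32 * (1 / √k) ^ 3) =
      √(1 + k) * ((-(k ^ 2) / 4 - 9 * k ^ 4 / 64) / √k ^ 2 + 3 * k ^ 4 / 32 / √k ^ 4) := by
    field_simp
  rw [this, h4, hsq]
  field_simp
  ring

lemma log_one_add_le_cubic {t : ℝ} (ht : 0 ≤ t) :
    Real.log (1 + t) ≤ t - t ^ 2 / 2 + t ^ 3 / 3 := by
  have hd : ∀ x ∈ Set.Ici (0 : ℝ), HasDerivAt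
      (fun x => x - x ^ 2 / 2 + x ^ 3 / 3 - Real.log (1 + x)) (x ^ 3 / (1 + x)) x := by
    intro x hx
    have hx1 : (1 : ℝ) + x ≠ 0 := by have := Set.mem_Ici.1 hx; positivity
    refine ((((hasDerivAt_id x).sub (((hasDerivAt_id x).pow 2).div_const 2)).add
      (((hasDerivAt_id x).pow 3).div_const 3)).sub
      (((hasDerivAt_id x).const_add 1).log hx1)).congr_deriv ?_
    simp
    field_simp
    ring
  have hm := monotoneOn_of_deriv_nonneg (convex_Ici 0)
    (fun x hx => (hd x hx).continuousAt.continuousWithinAt)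
    (fun x hx => (hd x (interior_subset hx)).differentiableAt.differentiableWithinAt)
    (fun x hx => by
      have := Set.mem_Ici.1 (interior_subset hx)
      rw [(hd x (interior_subset hx)).deriv]; positivity)
  have := hm Set.self_mem_Ici (Set.mem_Ici.2 ht) ht
  norm_num at this
  linarith

lemma quarter_mul_majorant_lt {k : ℝ} (hk : 0 < k) (hk1 : k ≤ 1) :
    (1 - k ^ 2 / 4) * (2 * ellKMajorant k (1 / √k)) < Real.log (4 / k) := by
  rw [two_mul_ellKMajorant hk]
  obtain ⟨t, ht⟩ : ∃ t, √(1 + k) = 1 + 2 * t := ⟨(√(1 + k) - 1) / 2, by ring⟩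
  have hsq : √(1 + k) ^ 2 = 1 + k := Real.sq_sqrt (by positivity)
  have hs1 : 1 < √(1 + k) := by
    rw [Real.lt_sqrt one_pos.le]; linarith
  have ht0 : 0 < t := by linarith
  have hkt : k = 4 * t + 4 * t ^ 2 := by rw [ht] at hsq; linarith
  have ht1 : t ≤ 21 / 100 := by nlinarith
  have hlog2 : Real.log 2 < 0.6931471808 := Real.log_two_lt_d9
  have h4 : Real.log (4 / k) = 2 * Real.log 2 - Real.log k := by
    rw [Real.log_div (by norm_num) hk.ne', show (4 : ℝ) = 2 ^ 2 by norm_num, Real.log_pow]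
    norm_num
  have h1s : Real.log (1 + √(1 + k)) = Real.log 2 + Real.log (1 + t) := by
    rw [ht, ← Real.log_mul (by norm_num) (by positivity)]; congr 1; ring
  have hlt := log_one_add_le_cubic ht0.le
  have hlt' := Real.log_le_sub_one_of_pos (show 0 < 1 + t by positivity)
  have hlk : -Real.log k ≤ 1 / k - 1 := by
    have := Real.log_le_sub_one_of_pos (inv_pos.2 hk)
    rwa [Real.log_inv, ← one_div] at this
  have hlk' : k * -Real.log k ≤ 1 - k := by
    have := mul_le_mul_of_nonneg_left hlk hk.le
    rwa [mul_sub, mul_one_div_cancel hk.ne', mul_one] at this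
  rw [h4, h1s, ht]
  have hlk0 : Real.log k ≤ 0 := Real.log_nonpos hk.le hk1
  have hlt0 : 0 ≤ Real.log (1 + t) := Real.log_nonneg (by linarith)
  have hl20 : 0 ≤ Real.log 2 := Real.log_nonneg (by norm_num)
  have hX : 0 ≤ 2 * (Real.log 2 + Real.log (1 + t)) - Real.log k := by linarith
  have hkX : k * (2 * (Real.log 2 + Real.log (1 + t)) - Real.log k) ≤ 1.81 := by
    nlinarith
  have hmid : (5 * k ^ 4 / 64 - 9 * k ^ 6 / 256) *
      (2 * (Real.log 2 + Real.log (1 + t)) - Real.log k) ≤ 5 * 1.81 / 64 * k ^ 3 := by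
    have h3 := mul_le_mul_of_nonneg_left hkX (show 0 ≤ 5 / 64 * k ^ 3 by positivity)
    have h6 := mul_nonneg (show 0 ≤ 9 * k ^ 6 / 256 by positivity) hX
    linarith
  have hpoly : 2 * (t - t ^ 2 / 2 + t ^ 3 / 3) + 5 * 1.81 / 64 * k ^ 3 +
      (1 - k ^ 2 / 4) * ((1 + 2 * t) * (-k / 2 + 3 * k ^ 2 / 16 - 9 * k ^ 3 / 32)) < 0 := by
    have hstep : ∀ n, t ^ (n + 1) ≤ 21 / 100 * t ^ n := fun n => by
      rw [pow_succ']; gcongr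
    have hq : -4 + 463 / 60 * t - 397 / 20 * t ^ 2 - 1137 / 20 * t ^ 3 + 5501 / 20 * t ^ 4 +
        1228 * t ^ 5 + 2052 * t ^ 6 + 1776 * t ^ 7 + 792 * t ^ 8 + 144 * t ^ 9 < 0 := by
      linarith [hstep 1, hstep 2, hstep 3, hstep 4, hstep 5, hstep 6, hstep 7, hstep 8,
        pow_pos ht0 2, pow_pos ht0 3]
    have := mul_neg_of_pos_of_neg (pow_pos ht0 2) hq
    rw [hkt]
    linarith
  linarith

theorem ellK_upper (r : ℝ) (hr : r ∈ Set.Ico (0:ℝ) 1) :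
    ellK r < (4 / (3 + r^2)) * Real.log (4 / Real.sqrt (1 - r^2)) := by
  obtain ⟨h0, h1⟩ := hr
  have hpos : 0 < 1 - r ^ 2 := by nlinarith
  have hk : 0 < √(1 - r ^ 2) := Real.sqrt_pos.2 hpos
  have hk2 : √(1 - r ^ 2) ^ 2 = 1 - r ^ 2 := Real.sq_sqrt hpos.le
  have hk1 : √(1 - r ^ 2) ≤ 1 := Real.sqrt_le_one.2 (by nlinarith)
  have hle := ellK_le_majorant hk (r := r) (by linarith)
  have hlt := quarter_mul_majorant_lt hk hk1
  rw [hk2] at hlt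
  rw [div_mul_eq_mul_div, lt_div_iff₀ (by positivity)]
  nlinarith [mul_le_mul_of_nonneg_right hle (show 0 ≤ 3 + r ^ 2 by positivity)]
end

section
/- The function r ↦ μ(r) + log r is monotone decreasing on (0,1), where μ(r) = (π/2)·K(r')/K(r) with r' = √(1−r²). -/
noncomputable def mu (r : ℝ) : ℝ :=
  (Real.pi/2) * ellK (Real.sqrt (1 - r^2)) / ellK r

open Real Set Filter Topology MeasureTheory intervalIntegral

/-- Differentiation under the integral sign over a compact interval, for an integrand whose
parameter derivative is jointly continuous. -/
theorem hasDerivAt_intervalIntegral_of_continuousOn {f f' : ℝ → ℝ → ℝ} {s : Set ℝ} {a b : ℝ}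
    (hs : IsOpen s) (hf : ∀ x ∈ s, Continuous (f x))
    (hf' : ContinuousOn (Function.uncurry f') (s ×ˢ univ))
    (hd : ∀ x ∈ s, ∀ t, HasDerivAt (fun y => f y t) (f' x t) x) {x : ℝ} (hx : x ∈ s) :
    HasDerivAt (fun y => ∫ t in a..b, f y t) (∫ t in a..b, f' x t) x := by
  obtain ⟨ε, hε, hball⟩ := Metric.nhds_basis_closedBall.mem_iff.1 (hs.mem_nhds hx)
  obtain ⟨C, hC⟩ := ((isCompact_closedBall x ε).prod (isCompact_uIcc (a := a) (b := b))
    ).exists_bound_of_continuousOn (hf'.mono (prod_mono hball (subset_univ _)))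
  have hc : Continuous (f' x) := by
    rw [← continuousOn_univ]
    exact hf'.comp (f := fun t => (x, t)) (by fun_prop) fun t _ => ⟨hx, mem_univ t⟩
  refine (hasDerivAt_integral_of_dominated_loc_of_deriv_le (bound := fun _ => C)
    (Metric.closedBall_mem_nhds x hε) ?_ ((hf x hx).intervalIntegrable _ _)
    hc.aestronglyMeasurable ?_ intervalIntegrable_const ?_).2
  · filter_upwards [hs.mem_nhds hx] with y hy using (hf y hy).aestronglyMeasurable
  · exact ae_of_all _ fun t ht y hy => hC (y, t) ⟨hy, uIoc_subset_uIcc ht⟩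
  · exact ae_of_all _ fun t _ y hy => hd y (hball hy) t

/-- The complete elliptic integral of the first kind, in the parameter `m = r ^ 2`. -/
noncomputable def ellipticK (m : ℝ) : ℝ :=
  ∫ θ in (0:ℝ)..(π / 2), 1 / √(1 - m * sin θ ^ 2)

/-- The complete elliptic integral of the second kind, in the parameter `m = r ^ 2`. -/
noncomputable def ellipticE (m : ℝ) : ℝ :=
  ∫ θ in (0:ℝ)..(π / 2), √(1 - m * sin θ ^ 2)

theorem one_sub_mul_sin_sq_pos {m : ℝ} (hm : m < 1) (θ : ℝ) : 0 < 1 - m * sin θ ^ 2 := by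
  rcases le_or_gt m 0 with h | h
  · nlinarith [sq_nonneg (sin θ)]
  · nlinarith [sin_sq_le_one θ]

theorem continuous_one_div_sqrt {m : ℝ} (hm : m < 1) :
    Continuous fun θ : ℝ => 1 / √(1 - m * sin θ ^ 2) := by
  have h θ : √(1 - m * sin θ ^ 2) ≠ 0 := (sqrt_pos.2 (one_sub_mul_sin_sq_pos hm θ)).ne'
  fun_prop (disch := exact h _)

theorem hasDerivAt_sqrt_one_sub_mul_sin_sq {m : ℝ} (hm : m < 1) (θ : ℝ) :
    HasDerivAt (fun m => √(1 - m * sin θ ^ 2)) (-sin θ ^ 2 / (2 * √(1 - m * sin θ ^ 2))) m := by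
  have h := (((hasDerivAt_id m).mul_const (sin θ ^ 2)).const_sub 1).sqrt
    (one_sub_mul_sin_sq_pos hm θ).ne'
  simpa using h

theorem hasDerivAt_ellipticE_integral {m : ℝ} (hm : m < 1) :
    HasDerivAt ellipticE (∫ θ in (0:ℝ)..(π / 2), -sin θ ^ 2 / (2 * √(1 - m * sin θ ^ 2))) m := by
  refine hasDerivAt_intervalIntegral_of_continuousOn (s := Iio 1)
    (f := fun m θ => √(1 - m * sin θ ^ 2)) (f' := fun m θ => -sin θ ^ 2 / (2 * √(1 - m * sin θ ^ 2)))
    isOpen_Iio (fun x _ => by fun_prop) ?_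
    (fun x hx θ => hasDerivAt_sqrt_one_sub_mul_sin_sq hx θ) hm
  refine ContinuousOn.div (by fun_prop) (by fun_prop) ?_
  rintro ⟨x, θ⟩ ⟨hx, -⟩
  have := sqrt_pos.2 (one_sub_mul_sin_sq_pos hx θ)
  positivity

theorem hasDerivAt_ellipticK_integral {m : ℝ} (hm : m < 1) :
    HasDerivAt ellipticK
      (∫ θ in (0:ℝ)..(π / 2), sin θ ^ 2 / (2 * √(1 - m * sin θ ^ 2) ^ 3)) m := by
  refine hasDerivAt_intervalIntegral_of_continuousOn (s := Iio 1)
    (f := fun m θ => 1 / √(1 - m * sin θ ^ 2))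
    (f' := fun m θ => sin θ ^ 2 / (2 * √(1 - m * sin θ ^ 2) ^ 3))
    isOpen_Iio (fun x hx => continuous_one_div_sqrt hx) ?_ ?_ hm
  · refine ContinuousOn.div (by fun_prop) (by fun_prop) ?_
    rintro ⟨x, θ⟩ ⟨hx, -⟩
    have := sqrt_pos.2 (one_sub_mul_sin_sq_pos hx θ)
    positivity
  · intro x hx θ
    have hpos := sqrt_pos.2 (one_sub_mul_sin_sq_pos hx θ)
    have h := (hasDerivAt_sqrt_one_sub_mul_sin_sq hx θ).inv hpos.ne'
    simp only [one_div]
    refine h.congr_deriv ?_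
    field_simp

theorem hasDerivAt_ellipticE {m : ℝ} (h0 : 0 < m) (h1 : m < 1) :
    HasDerivAt ellipticE ((ellipticE m - ellipticK m) / (2 * m)) m := by
  refine (hasDerivAt_ellipticE_integral h1).congr_deriv ?_
  rw [eq_div_iff (by positivity), ellipticE, ellipticK, ← intervalIntegral.integral_sub
    (Continuous.intervalIntegrable (by fun_prop) _ _)
    ((continuous_one_div_sqrt h1).intervalIntegrable _ _), ← intervalIntegral.integral_mul_const]
  refine intervalIntegral.integral_congr fun θ _ => ?_
  have hpos := one_sub_mul_sin_sq_pos h1 θ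
  have hsq := sq_sqrt hpos.le
  have := sqrt_pos.2 hpos
  generalize √(1 - m * sin θ ^ 2) = d at *
  field_simp
  rw [hsq]
  ring

theorem integral_deriv_sin_mul_cos_div_sqrt {m : ℝ} (hm : m < 1) :
    ∫ θ in (0:ℝ)..(π / 2),
      (1 - 2 * sin θ ^ 2 + m * sin θ ^ 4) / √(1 - m * sin θ ^ 2) ^ 3 = 0 := by
  have hpos θ := sqrt_pos.2 (one_sub_mul_sin_sq_pos hm θ)
  rw [integral_eq_sub_of_hasDerivAt (f := fun θ => sin θ * cos θ / √(1 - m * sin θ ^ 2))]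
  · simp
  · intro θ _
    have hs := (((((hasDerivAt_sin θ).pow 2).const_mul m).const_sub 1).sqrt
      (one_sub_mul_sin_sq_pos hm θ).ne')
    refine (((hasDerivAt_sin θ).mul (hasDerivAt_cos θ)).div hs (hpos θ).ne').congr_deriv ?_
    have hsq := sq_sqrt (one_sub_mul_sin_sq_pos hm θ).le
    have hc := cos_sq' θ
    have := hpos θ
    simp only [Pi.mul_apply, Pi.pow_apply, Nat.cast_ofNat, Nat.add_one_sub_one, pow_one]
    generalize √(1 - m * sin θ ^ 2) = d at *
    field_simp
    rw [hsq]
    linear_combination hc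
  · have h θ := (hpos θ).ne'
    exact Continuous.intervalIntegrable (by fun_prop (disch := exact fun θ => pow_ne_zero _ (h θ))) _ _

theorem hasDerivAt_ellipticK {m : ℝ} (h0 : 0 < m) (h1 : m < 1) :
    HasDerivAt ellipticK ((ellipticE m - (1 - m) * ellipticK m) / (2 * m * (1 - m))) m := by
  have h1' : 0 < 1 - m := sub_pos.2 h1
  have hne θ := (sqrt_pos.2 (one_sub_mul_sin_sq_pos h1 θ)).ne'
  refine (hasDerivAt_ellipticK_integral h1).congr_deriv ?_
  rw [eq_div_iff (by positivity), ← sub_eq_zero, ellipticE, ellipticK,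
    ← intervalIntegral.integral_const_mul, ← intervalIntegral.integral_mul_const,
    ← intervalIntegral.integral_sub (Continuous.intervalIntegrable (by fun_prop) _ _)
      (((continuous_one_div_sqrt h1).const_mul _).intervalIntegrable _ _),
    ← intervalIntegral.integral_sub]
  · have hzero := congrArg (-m * ·) (integral_deriv_sin_mul_cos_div_sqrt h1)
    simp only [← intervalIntegral.integral_const_mul, mul_zero] at hzero
    refine Eq.trans ?_ hzero
    refine intervalIntegral.integral_congr fun θ _ => ?_
    have hpos := one_sub_mul_sin_sq_pos h1 θ
    have hsq := sq_sqrt hpos.le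
    have := sqrt_pos.2 hpos
    generalize √(1 - m * sin θ ^ 2) = d at *
    field_simp
    linear_combination (1 - m - d ^ 2 - (1 - m * sin θ ^ 2)) * hsq
  · exact Continuous.intervalIntegrable
      (by fun_prop (disch := exact fun θ => mul_ne_zero two_ne_zero (pow_ne_zero _ (hne θ)))) _ _
  · exact Continuous.intervalIntegrable
      (by have := continuous_one_div_sqrt h1; fun_prop) _ _

theorem ellipticK_pos {m : ℝ} (hm : m < 1) : 0 < ellipticK m :=
  intervalIntegral_pos_of_pos_on ((continuous_one_div_sqrt hm).intervalIntegrable _ _)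
    (fun θ _ => one_div_pos.2 (sqrt_pos.2 (one_sub_mul_sin_sq_pos hm θ))) (by positivity)

theorem ellipticK_lt {m : ℝ} (h0 : 0 < m) (h1 : m < 1) :
    ellipticK m < π / 2 / √(1 - m) := by
  have h1' : 0 < 1 - m := sub_pos.2 h1
  have h : ∫ θ in (0:ℝ)..(π / 2), 1 / √(1 - m) = π / 2 / √(1 - m) := by
    rw [intervalIntegral.integral_const, smul_eq_mul, sub_zero, mul_one_div]
  rw [← h]
  refine integral_lt_integral_of_continuousOn_of_le_of_exists_lt (by positivity)
    (continuous_one_div_sqrt h1).continuousOn continuousOn_const (fun θ _ => ?_) ⟨0, ?_, ?_⟩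
  · refine one_div_le_one_div_of_le (sqrt_pos.2 h1') (sqrt_le_sqrt ?_)
    nlinarith [sin_sq_le_one θ]
  · exact ⟨le_rfl, by positivity⟩
  · refine one_div_lt_one_div_of_lt (sqrt_pos.2 h1') (sqrt_lt_sqrt h1'.le ?_)
    simpa using h0

theorem ellipticE_zero : ellipticE 0 = π / 2 := by simp [ellipticE]

theorem ellipticK_zero : ellipticK 0 = π / 2 := by simp [ellipticK]

theorem ellipticE_one : ellipticE 1 = 1 := by
  have : ellipticE 1 = ∫ θ in (0:ℝ)..(π / 2), cos θ := by
    refine intervalIntegral.integral_congr fun θ hθ => ?_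
    rw [uIcc_of_le (by positivity)] at hθ
    rw [one_mul, ← cos_sq', sqrt_sq (cos_nonneg_of_mem_Icc ⟨by linarith [hθ.1, pi_pos], hθ.2⟩)]
  simp [this]

theorem continuous_ellipticE : Continuous ellipticE := by
  unfold ellipticE
  exact continuous_parametric_intervalIntegral_of_continuous' (by fun_prop) _ _

theorem ellipticK_sub_ellipticE_nonneg {m : ℝ} (h0 : 0 ≤ m) (h1 : m < 1) :
    0 ≤ ellipticK m - ellipticE m := by
  refine sub_nonneg.2 (intervalIntegral.integral_mono_on (by positivity)
    (Continuous.intervalIntegrable (by fun_prop) _ _)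
    ((continuous_one_div_sqrt h1).intervalIntegrable _ _) fun θ _ => ?_)
  have hpos := one_sub_mul_sin_sq_pos h1 θ
  rw [le_div_iff₀ (sqrt_pos.2 hpos), mul_self_sqrt hpos.le]
  nlinarith [sq_nonneg (sin θ)]

theorem ellipticK_sub_ellipticE_le {m : ℝ} (h0 : 0 ≤ m) (h1 : m < 1) :
    ellipticK m - ellipticE m ≤ m * ellipticK m := by
  have hK := continuous_one_div_sqrt h1
  rw [ellipticK, ellipticE, ← intervalIntegral.integral_const_mul,
    ← intervalIntegral.integral_sub (hK.intervalIntegrable _ _)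
      (Continuous.intervalIntegrable (by fun_prop) _ _)]
  refine intervalIntegral.integral_mono_on (by positivity)
    (Continuous.intervalIntegrable (by fun_prop) _ _)
    ((hK.const_mul m).intervalIntegrable _ _) fun θ _ => ?_
  have hpos := one_sub_mul_sin_sq_pos h1 θ
  have hs := sqrt_pos.2 hpos
  have hsq := sq_sqrt hpos.le
  field_simp
  rw [hsq]
  nlinarith [sin_sq_le_one θ]

/-- The left-hand side of Legendre's relation. -/
noncomputable def legendre (m : ℝ) : ℝ :=
  (ellipticE m - ellipticK m) * ellipticK (1 - m) + ellipticE (1 - m) * ellipticK m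

theorem hasDerivAt_legendre {m : ℝ} (h0 : 0 < m) (h1 : m < 1) : HasDerivAt legendre 0 m := by
  have h1' : 0 < 1 - m := sub_pos.2 h1
  have hsub : HasDerivAt (fun m : ℝ => 1 - m) (-1) m := (hasDerivAt_id m).const_sub 1
  have hE := hasDerivAt_ellipticE h0 h1
  have hK := hasDerivAt_ellipticK h0 h1
  have hE' := (hasDerivAt_ellipticE h1' (by linarith)).comp m hsub
  have hK' := (hasDerivAt_ellipticK h1' (by linarith)).comp m hsub
  refine (((hE.sub hK).mul hK').add (hE'.mul hK)).congr_deriv ?_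
  simp only [Pi.sub_apply, Function.comp_apply, sub_sub_cancel]
  field_simp
  ring

theorem tendsto_legendre : Tendsto legendre (𝓝[>] 0) (𝓝 (π / 2)) := by
  have hK : Tendsto ellipticK (𝓝[>] 0) (𝓝 (π / 2)) := by
    rw [← ellipticK_zero]
    exact (hasDerivAt_ellipticK_integral one_pos).continuousAt.tendsto.mono_left
      nhdsWithin_le_nhds
  have hE : Tendsto (fun m => ellipticE (1 - m)) (𝓝[>] 0) (𝓝 1) := by
    have h : Continuous fun m => ellipticE (1 - m) := continuous_ellipticE.comp (by fun_prop)
    have h0 := h.tendsto 0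
    rw [sub_zero, ellipticE_one] at h0
    exact h0.mono_left nhdsWithin_le_nhds
  have hsqrt : Tendsto (fun m : ℝ => √m) (𝓝[>] 0) (𝓝 0) := by
    have h := continuous_sqrt.tendsto 0
    rw [sqrt_zero] at h
    exact h.mono_left nhdsWithin_le_nhds
  have hbound : Tendsto (fun m => √m * (ellipticK m * (π / 2))) (𝓝[>] 0) (𝓝 0) := by
    simpa using hsqrt.mul (hK.mul_const (π / 2))
  have hprod : Tendsto (fun m => (ellipticE m - ellipticK m) * ellipticK (1 - m)) (𝓝[>] 0)
      (𝓝 0) := by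
    refine squeeze_zero_norm' ?_ hbound
    filter_upwards [Ioo_mem_nhdsGT (one_pos : (0:ℝ) < 1)] with m hm
    have h1' : 0 < 1 - m := sub_pos.2 hm.2
    have hKpos := ellipticK_pos hm.2
    have hK'pos := ellipticK_pos (m := 1 - m) (by linarith [hm.1])
    have hlt := ellipticK_lt h1' (by linarith [hm.1])
    rw [sub_sub_cancel] at hlt
    have hm0 := hm.1
    rw [norm_mul, norm_of_nonneg hK'pos.le, norm_sub_rev,
      norm_of_nonneg (ellipticK_sub_ellipticE_nonneg hm.1.le hm.2)]
    calc _ ≤ m * ellipticK m * (π / 2 / √m) :=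
          mul_le_mul (ellipticK_sub_ellipticE_le hm.1.le hm.2) hlt.le hK'pos.le (by positivity)
      _ = √m * (ellipticK m * (π / 2)) := by
          have hs := sqrt_pos.2 hm.1
          field_simp
          rw [sq_sqrt hm0.le]
  have h := hprod.add (hE.mul hK)
  rwa [zero_add, one_mul] at h

/-- **Legendre's relation**. -/
theorem legendre_eq {m : ℝ} (h0 : 0 < m) (h1 : m < 1) : legendre m = π / 2 := by
  have hconst : ∀ x ∈ Ioo (0:ℝ) 1, legendre x = legendre m := fun x hx =>
    isOpen_Ioo.is_const_of_deriv_eq_zero isPreconnected_Ioo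
      (fun y hy => (hasDerivAt_legendre hy.1 hy.2).differentiableAt.differentiableWithinAt)
      (fun y hy => (hasDerivAt_legendre hy.1 hy.2).deriv) hx ⟨h0, h1⟩
  refine tendsto_nhds_unique (tendsto_const_nhds.congr' ?_) tendsto_legendre
  filter_upwards [Ioo_mem_nhdsGT (one_pos : (0:ℝ) < 1)] with x hx using (hconst x hx).symm

theorem hasDerivAt_ellipticK_ratio {m : ℝ} (h0 : 0 < m) (h1 : m < 1) :
    HasDerivAt (fun m => ellipticK (1 - m) / ellipticK m)
      (-π / (4 * m * (1 - m) * ellipticK m ^ 2)) m := by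
  have h1' : 0 < 1 - m := sub_pos.2 h1
  have hsub : HasDerivAt (fun m : ℝ => 1 - m) (-1) m := (hasDerivAt_id m).const_sub 1
  have hK := hasDerivAt_ellipticK h0 h1
  have hK' := (hasDerivAt_ellipticK h1' (by linarith)).comp m hsub
  have hpos := ellipticK_pos h1
  refine (hK'.div hK hpos.ne').congr_deriv ?_
  have hL := legendre_eq h0 h1
  rw [legendre] at hL
  simp only [Function.comp_apply, sub_sub_cancel]
  field_simp
  linear_combination (-4) * hL

theorem strictAntiOn_ellipticK_ratio_add_log :
    StrictAntiOn (fun m => π / 2 * (ellipticK (1 - m) / ellipticK m) + log m / 2)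
      (Ioo (0:ℝ) 1) := by
  have hd : ∀ m ∈ Ioo (0:ℝ) 1, HasDerivAt
      (fun m => π / 2 * (ellipticK (1 - m) / ellipticK m) + log m / 2)
      (π / 2 * (-π / (4 * m * (1 - m) * ellipticK m ^ 2)) + m⁻¹ / 2) m := fun m hm =>
    ((hasDerivAt_ellipticK_ratio hm.1 hm.2).const_mul _).add ((hasDerivAt_log hm.1.ne').div_const 2)
  refine strictAntiOn_of_deriv_neg (convex_Ioo 0 1)
    (fun m hm => (hd m hm).continuousAt.continuousWithinAt) fun m hm => ?_
  rw [interior_Ioo] at hm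
  rw [(hd m hm).deriv]
  obtain ⟨h0, h1⟩ := hm
  have h1' : 0 < 1 - m := sub_pos.2 h1
  have hpos := ellipticK_pos h1
  have hlt := ellipticK_lt h0 h1
  rw [lt_div_iff₀ (sqrt_pos.2 h1')] at hlt
  have hsq : ellipticK m ^ 2 * (1 - m) < (π / 2) ^ 2 := by
    rw [← sq_sqrt h1'.le, ← mul_pow]
    exact pow_lt_pow_left₀ hlt (by positivity) two_ne_zero
  have heq : π / 2 * (-π / (4 * m * (1 - m) * ellipticK m ^ 2)) + m⁻¹ / 2 =
      (ellipticK m ^ 2 * (1 - m) - (π / 2) ^ 2) / (2 * m * (1 - m) * ellipticK m ^ 2) := by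
    field_simp
    ring
  rw [heq]
  exact div_neg_of_neg_of_pos (sub_neg.2 hsq) (by positivity)

theorem mu_eq_ellipticK_ratio {r : ℝ} (hr : r ^ 2 ≤ 1) :
    mu r = π / 2 * (ellipticK (1 - r ^ 2) / ellipticK (r ^ 2)) := by
  rw [mu, ellK, ellK, ellipticK, ellipticK, sq_sqrt (sub_nonneg.2 hr), mul_div_assoc]

theorem mu_add_log_strictAnti :
    StrictAntiOn (fun r => mu r + Real.log r) (Set.Ioo (0:ℝ) 1) := by
  have hmem : ∀ r ∈ Ioo (0:ℝ) 1, r ^ 2 ∈ Ioo (0:ℝ) 1 := fun r hr =>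
    ⟨pow_pos hr.1 2, pow_lt_one₀ hr.1.le hr.2 two_ne_zero⟩
  have heq : ∀ r ∈ Ioo (0:ℝ) 1, mu r + log r =
      π / 2 * (ellipticK (1 - r ^ 2) / ellipticK (r ^ 2)) + log (r ^ 2) / 2 := by
    intro r hr
    rw [mu_eq_ellipticK_ratio (hmem r hr).2.le, log_pow]
    push_cast
    ring
  intro r hr s hs hrs
  simp only [heq r hr, heq s hs]
  exact strictAntiOn_ellipticK_ratio_add_log (hmem r hr) (hmem s hs)
    (pow_lt_pow_left₀ hrs hr.1.le two_ne_zero)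
end

section
/- For r in (0,1), with α = r² and β = φ_{1/7}(r)², one has (αβ)^{1/8} + ((1−α)(1−β))^{1/8} = 1. -/
noncomputable def muInv (y : ℝ) : ℝ := Function.invFunOn mu (Set.Ioo 0 1) y

noncomputable def phi (K r : ℝ) : ℝ :=
  if r = 0 then 0 else if r = 1 then 1 else muInv (mu r / K)

open Set intervalIntegral

section EllipticIntegral

/-- The complete elliptic integral of the first kind as a function of the parameter `a = r ^ 2`. -/
noncomputable def ellL (a : ℝ) : ℝ :=
  ∫ θ in (0:ℝ)..(Real.pi / 2), 1 / Real.sqrt (1 - a * Real.sin θ ^ 2)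

theorem ellK_eq_ellL (r : ℝ) : ellK r = ellL (r ^ 2) := rfl

theorem one_sub_mul_sin_sq_pos_s14 {a : ℝ} (ha : a < 1) (θ : ℝ) : 0 < 1 - a * Real.sin θ ^ 2 := by
  have h1 := Real.sin_sq_le_one θ
  have h2 := sq_nonneg (Real.sin θ)
  rcases le_or_gt a 0 with h | h <;> nlinarith

theorem continuous_ellL_integrand {a : ℝ} (ha : a < 1) :
    Continuous fun θ : ℝ => 1 / Real.sqrt (1 - a * Real.sin θ ^ 2) := by
  refine continuous_const.div (by fun_prop) fun θ => ?_
  exact (Real.sqrt_pos.2 (one_sub_mul_sin_sq_pos_s14 ha θ)).ne'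

theorem ellL_pos {a : ℝ} (ha : a < 1) : 0 < ellL a := by
  refine intervalIntegral_pos_of_pos ((continuous_ellL_integrand ha).intervalIntegrable _ _)
    (fun θ => ?_) (by positivity)
  exact one_div_pos.2 (Real.sqrt_pos.2 (one_sub_mul_sin_sq_pos_s14 ha θ))

theorem ellL_lt_ellL {a b : ℝ} (hab : a < b) (hb : b < 1) : ellL a < ellL b := by
  have hpi : (0:ℝ) < Real.pi / 2 := by positivity
  refine integral_lt_integral_of_continuousOn_of_le_of_exists_lt hpi
    (continuous_ellL_integrand (hab.trans hb)).continuousOn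
    (continuous_ellL_integrand hb).continuousOn (fun θ _ => ?_) ⟨Real.pi / 2, ⟨hpi.le, le_rfl⟩, ?_⟩
  · refine one_div_le_one_div_of_le (Real.sqrt_pos.2 (one_sub_mul_sin_sq_pos_s14 hb θ))
      (Real.sqrt_le_sqrt ?_)
    nlinarith [sq_nonneg (Real.sin θ)]
  · refine one_div_lt_one_div_of_lt (Real.sqrt_pos.2 (one_sub_mul_sin_sq_pos_s14 hb _))
      (Real.sqrt_lt_sqrt (one_sub_mul_sin_sq_pos_s14 hb _).le ?_)
    simp only [Real.sin_pi_div_two]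
    linarith

theorem mu_sqrt {a : ℝ} (ha : a ∈ Ioo (0:ℝ) 1) :
    mu (Real.sqrt a) = Real.pi / 2 * ellL (1 - a) / ellL a := by
  rw [mu, ellK_eq_ellL, ellK_eq_ellL, Real.sq_sqrt ha.1.le, Real.sq_sqrt (sub_nonneg.2 ha.2.le)]

theorem mu_strictAntiOn : StrictAntiOn mu (Ioo 0 1) := by
  intro r hr s hs hrs
  have hr2 : r ^ 2 ∈ Ioo (0:ℝ) 1 := ⟨pow_pos hr.1 2, by nlinarith [hr.1, hr.2]⟩
  have hs2 : s ^ 2 ∈ Ioo (0:ℝ) 1 := ⟨pow_pos hs.1 2, by nlinarith [hs.1, hs.2]⟩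
  have hrs2 : r ^ 2 < s ^ 2 := by nlinarith [hr.1, hs.1]
  rw [← Real.sqrt_sq hr.1.le, ← Real.sqrt_sq hs.1.le, mu_sqrt hr2, mu_sqrt hs2]
  have h1 := ellL_lt_ellL hrs2 hs2.2
  have h2 : ellL (1 - s ^ 2) < ellL (1 - r ^ 2) := ellL_lt_ellL (by linarith) (by linarith [hr2.1])
  have h3 := ellL_pos hr2.2
  have h4 := mul_pos Real.pi_div_two_pos (ellL_pos (show 1 - r ^ 2 < 1 by linarith [hr2.1]))
  have hpi := Real.pi_div_two_pos
  gcongr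

theorem muInv_mu {s : ℝ} (hs : s ∈ Ioo (0:ℝ) 1) : muInv (mu s) = s :=
  mu_strictAntiOn.injOn.leftInvOn_invFunOn hs

/-- Change of variables in the complete elliptic integral: a map `y` of `[0, 1]` onto itself with
`y' / √((1 - y²)(1 - αy²)) = m / √((1 - x²)(1 - βx²))` multiplies the integral by `m`. -/
theorem ellL_eq_mul_of_substitution {α β m : ℝ} (hα : α < 1) (hβ : β < 1) {y y' : ℝ → ℝ}
    (hcont : ContinuousOn y (Icc 0 1)) (h0 : y 0 = 0) (h1 : y 1 = 1)
    (hderiv : ∀ x ∈ Ioo (0:ℝ) 1, HasDerivAt y (y' x) x)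
    (hlt : ∀ x ∈ Ioo (0:ℝ) 1, y x ∈ Ioo (-1:ℝ) 1)
    (hdiff : ∀ x ∈ Ioo (0:ℝ) 1,
      1 / Real.sqrt (1 - α * y x ^ 2)
          * (1 / Real.sqrt (1 - y x ^ 2) * (y' x * Real.sqrt (1 - x ^ 2)))
        = m * (1 / Real.sqrt (1 - β * x ^ 2))) :
    ellL α = m * ellL β := by
  have hpi : (0:ℝ) < Real.pi / 2 := by positivity
  have hF : ∀ a : ℝ, a < 1 → ∀ u, HasDerivAt
      (fun u => ∫ θ in (0:ℝ)..u, 1 / Real.sqrt (1 - a * Real.sin θ ^ 2))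
      (1 / Real.sqrt (1 - a * Real.sin u ^ 2)) u := fun a ha u =>
    (continuous_ellL_integrand ha).integral_hasStrictDerivAt 0 u |>.hasDerivAt
  set F : ℝ → ℝ := fun u => ∫ θ in (0:ℝ)..u, 1 / Real.sqrt (1 - α * Real.sin θ ^ 2)
  set G : ℝ → ℝ := fun u => ∫ θ in (0:ℝ)..u, 1 / Real.sqrt (1 - β * Real.sin θ ^ 2)
  have hFc : Continuous F := continuous_iff_continuousAt.2 fun u => (hF α hα u).continuousAt
  have hGc : Continuous G := continuous_iff_continuousAt.2 fun u => (hF β hβ u).continuousAt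
  have hmaps : MapsTo Real.sin (Icc 0 (Real.pi / 2)) (Icc 0 1) := fun θ hθ =>
    ⟨Real.sin_nonneg_of_nonneg_of_le_pi hθ.1 (by linarith [hθ.2]), Real.sin_le_one θ⟩
  let H : ℝ → ℝ := fun θ => F (Real.arcsin (y (Real.sin θ))) - m * G θ
  have hHc : ContinuousOn H (Icc 0 (Real.pi / 2)) := by
    refine ContinuousOn.sub ?_ (continuous_const.mul hGc).continuousOn
    exact (hFc.comp Real.continuous_arcsin).comp_continuousOn
      (hcont.comp Real.continuous_sin.continuousOn hmaps)
  have hHd : ∀ θ ∈ Ioo (0:ℝ) (Real.pi / 2), HasDerivAt H 0 θ := by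
    intro θ hθ
    have hcos : 0 < Real.cos θ := Real.cos_pos_of_mem_Ioo ⟨by linarith [hθ.1], hθ.2⟩
    have hsin : Real.sin θ ∈ Ioo (0:ℝ) 1 := by
      refine ⟨Real.sin_pos_of_pos_of_lt_pi hθ.1 (by linarith [hθ.2]), ?_⟩
      nlinarith [Real.sin_sq_add_cos_sq θ, Real.sin_le_one θ]
    have hy := hlt _ hsin
    have key := hdiff _ hsin
    rw [← Real.cos_eq_sqrt_one_sub_sin_sq (by linarith [hθ.1]) hθ.2.le] at key
    have d1 := (hderiv _ hsin).comp θ (Real.hasDerivAt_sin θ)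
    have d2 := (Real.hasDerivAt_arcsin hy.1.ne' hy.2.ne).comp θ d1
    have d3 := (hF α hα (Real.arcsin (y (Real.sin θ)))).comp θ d2
    rw [Real.sin_arcsin hy.1.le hy.2.le, key] at d3
    have d4 := d3.sub ((hF β hβ θ).const_mul m)
    rw [sub_self] at d4
    exact d4
  obtain ⟨θ, _, h⟩ := exists_hasDerivAt_eq_slope H (fun _ => 0) hpi hHc hHd
  have hH : H (Real.pi / 2) - H 0 = 0 := by
    rcases div_eq_zero_iff.1 h.symm with h | h
    · exact h
    · linarith
  simp only [H, Real.sin_pi_div_two, Real.sin_zero, h0, h1, Real.arcsin_one, Real.arcsin_zero] at hH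
  have hF0 : F 0 = 0 := integral_same
  have hG0 : G 0 = 0 := integral_same
  rw [hF0, hG0] at hH
  change F (Real.pi / 2) = m * G (Real.pi / 2)
  linarith

end EllipticIntegral

section SepticTransformation

/-- Jacobi's transformation of degree seven, determined by
`1 - y = (1 - x) (1 - bx + cx² - dx³)² / V`. -/
theorem ellL_eq_mul_of_septic {b c d t α β : ℝ} (ht : 0 < t) (hα0 : 0 < α) (hα : α < 1)
    (hβ : β < 1) (hb : 0 < b) (hc : 0 < c) (hd : 0 < d)
    (p0 : 0 < 1 - b + c - d) (p1 : 0 < b - 2 * c + 3 * d) (p2 : 0 < c - 3 * d)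
    (hβd : β = t * d) (hαd : α * d = t ^ 7)
    (e1 : (1 + 2 * b) * t ^ 3 = d + 2 * c)
    (e3 : (b ^ 2 + 2 * c + 2 * b * c + 2 * d) * t ^ 2 = c ^ 2 + 2 * b * d + 2 * b * c + 2 * d)
    (e5 : (c ^ 2 + 2 * b * d + 2 * c * d) * t = d * (b ^ 2 + 2 * c + 2 * b))
    (r1 : (2 * c - b ^ 2 + 2 * (3 * d - b * c) - 2 * b) * d
      = -((1 + 2 * b) * (c ^ 2 - 2 * b * d) * t))
    (r2 : c ^ 2 - 2 * b * d + 2 * (c * d) - 2 * (3 * d - b * c)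
      = -((1 + 2 * b) * (2 * c - b ^ 2) * t ^ 2)) :
    ellL α = (1 + 2 * b) * ellL β := by
  obtain ⟨V, V_def⟩ : ∃ V : ℝ → ℝ, ∀ X, V X = 1 + (b ^ 2 + 2 * c + 2 * b) * X
    + (c ^ 2 + 2 * b * d + 2 * b * c + 2 * d) * X ^ 2 + (d ^ 2 + 2 * c * d) * X ^ 3 :=
    ⟨_, fun _ => rfl⟩
  obtain ⟨N, N_def⟩ : ∃ N : ℝ → ℝ, ∀ X, N X = 1 + 2 * b
    + (b ^ 2 + 2 * c + 2 * b * c + 2 * d) * X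
    + (c ^ 2 + 2 * b * d + 2 * c * d) * X ^ 2 + d ^ 2 * X ^ 3 := ⟨_, fun _ => rfl⟩
  obtain ⟨W, W_def⟩ : ∃ W : ℝ → ℝ, ∀ X, W X = 1
    + (2 * c - b ^ 2) * X + (c ^ 2 - 2 * b * d) * X ^ 2 - d ^ 2 * X ^ 3 := ⟨_, fun _ => rfl⟩
  obtain ⟨Z, Z_def⟩ : ∃ Z : ℝ → ℝ, ∀ X, Z X = 1 - (c ^ 2 - 2 * b * d) * t / d * X
    - (2 * c - b ^ 2) * t ^ 2 * X ^ 2 - t ^ 3 * d * X ^ 3 := ⟨_, fun _ => rfl⟩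
  have hVN : ∀ X, V X ^ 2 - X * N X ^ 2 = (1 - X) * W X ^ 2 := fun X => by
    simp only [V_def, N_def, W_def]; ring
  have hVpos : ∀ X, 0 ≤ X → 0 < V X := fun X hX => by rw [V_def]; positivity
  have hNpos : ∀ X, 0 ≤ X → 0 < N X := fun X hX => by rw [N_def]; positivity
  have hβpos : 0 < β := hβd ▸ mul_pos ht hd
  -- the involution `X ↦ 1 / (βX)`
  have hVZ : ∀ X, 0 < X → V X ^ 2 - α * X * N X ^ 2 = (1 - β * X) * Z X ^ 2 := by
    intro X hX
    have hα' : α = t ^ 7 / d := by rw [← hαd]; field_simp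
    have hN : N (1 / (β * X)) = V X / (t ^ 3 * d * X ^ 3) := by
      simp only [N_def, V_def, hβd]
      field_simp
      linear_combination X ^ 3 * d ^ 2 * e1 + d * X ^ 2 * e3 + X * e5
    have hV : V (1 / (β * X)) = N X * t ^ 2 / (β ^ 2 * X ^ 3) := by
      simp only [N_def, V_def, hβd]
      field_simp
      linear_combination -e1 - t * X * e3 - t ^ 2 * X ^ 2 * e5
    have hW : W (1 / (β * X)) = - Z X / (t ^ 3 * d * X ^ 3) := by
      simp only [W_def, Z_def, hβd]
      field_simp
      ring
    have h := hVN (1 / (β * X))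
    rw [hN, hV, hW, hβd] at h
    rw [hα', hβd]
    field_simp at h ⊢
    linear_combination -h
  have hZpos : ∀ X, X ∈ Icc (0:ℝ) 1 → 0 < Z X := by
    intro X hX
    by_contra! hneg
    have hZc : ContinuousOn Z (Icc 0 X) := by
      rw [funext Z_def]
      fun_prop
    have hZ0 : Z 0 = 1 := by simp [Z_def]
    obtain ⟨Y, hY, hZY⟩ := intermediate_value_Icc' hX.1 hZc (show (0:ℝ) ∈ Icc (Z X) (Z 0) from
      ⟨hneg, by rw [hZ0]; exact zero_le_one⟩)
    have hY0 : 0 < Y := by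
      rcases hY.1.eq_or_lt with h | h
      · rw [← h, hZ0] at hZY
        exact absurd hZY one_ne_zero
      · exact h
    have h1 := hVZ Y hY0
    have h2 := hVN Y
    have h3 := hVpos Y hY0.le
    have h4 : 0 ≤ (1 - Y) * W Y ^ 2 := mul_nonneg (by linarith [hY.2, hX.2]) (sq_nonneg _)
    have h5 : 0 < (1 - α) * V Y ^ 2 := mul_pos (by linarith) (by positivity)
    rw [hZY] at h1
    nlinarith
  have hP : ∀ x ∈ Icc (0:ℝ) 1, 0 < 1 - b * x + c * x ^ 2 - d * x ^ 3 := by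
    intro x hx
    have hx' : 0 ≤ 1 - x := by linarith [hx.2]
    have : 1 - b * x + c * x ^ 2 - d * x ^ 3 = (1 - b + c - d) + (b - 2 * c + 3 * d) * (1 - x)
        + (c - 3 * d) * (1 - x) ^ 2 + d * (1 - x) ^ 3 := by ring
    rw [this]
    positivity
  have hWpos : ∀ x ∈ Icc (0:ℝ) 1, 0 < W (x ^ 2) := by
    intro x hx
    have h0 := hx.1
    have : W (x ^ 2) = (1 - b * x + c * x ^ 2 - d * x ^ 3) * (1 + b * x + c * x ^ 2 + d * x ^ 3) := by
      rw [W_def]; ring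
    rw [this]
    exact mul_pos (hP x hx) (by positivity)
  have hVx : ∀ x : ℝ, 0 < V (x ^ 2) := fun x => hVpos _ (sq_nonneg x)
  have hderiv : ∀ x, HasDerivAt (fun x => x * N (x ^ 2) / V (x ^ 2))
      ((1 + 2 * b) * W (x ^ 2) * Z (x ^ 2) / V (x ^ 2) ^ 2) x := by
    intro x
    have hX : HasDerivAt (fun x : ℝ => x ^ 2) (2 * x) x := by
      simpa using hasDerivAt_pow 2 x
    have hN : HasDerivAt (fun x => x * N (x ^ 2)) (1 + 2 * b
        + 3 * (b ^ 2 + 2 * c + 2 * b * c + 2 * d) * x ^ 2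
        + 5 * (c ^ 2 + 2 * b * d + 2 * c * d) * x ^ 4 + 7 * d ^ 2 * x ^ 6) x := by
      simp only [N_def]
      refine ((hasDerivAt_id x).mul ((((hasDerivAt_const x _).add (hX.const_mul _)).add
        ((hX.pow 2).const_mul _)).add ((hX.pow 3).const_mul _))).congr_deriv ?_
      simp
      ring
    have hV : HasDerivAt (fun x => V (x ^ 2)) (2 * (b ^ 2 + 2 * c + 2 * b) * x
        + 4 * (c ^ 2 + 2 * b * d + 2 * b * c + 2 * d) * x ^ 3
        + 6 * (d ^ 2 + 2 * c * d) * x ^ 5) x := by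
      simp only [V_def]
      refine ((((hasDerivAt_const x _).add (hX.const_mul _)).add
        ((hX.pow 2).const_mul _)).add ((hX.pow 3).const_mul _)).congr_deriv ?_
      simp
      ring
    refine (hN.div hV (hVx x).ne').congr_deriv ?_
    congr 1
    have hR : (1 + 2 * b) * Z (x ^ 2) = 1 + 2 * b
        + (2 * c - b ^ 2 + 2 * (3 * d - b * c) - 2 * b) * x ^ 2
        + (c ^ 2 - 2 * b * d + 2 * (c * d) - 2 * (3 * d - b * c)) * x ^ 4
        - (d ^ 2 + 2 * c * d) * x ^ 6 := by
      rw [Z_def]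
      field_simp
      linear_combination (-x ^ 2) * r1 - d * x ^ 4 * r2 - d ^ 2 * x ^ 6 * e1
    rw [mul_right_comm (1 + 2 * b) (W (x ^ 2)), hR]
    simp only [N_def, V_def, W_def]
    ring
  refine ellL_eq_mul_of_substitution hα hβ (y := fun x => x * N (x ^ 2) / V (x ^ 2))
    (y' := fun x => (1 + 2 * b) * W (x ^ 2) * Z (x ^ 2) / V (x ^ 2) ^ 2)
    (fun x _ => (hderiv x).continuousAt.continuousWithinAt) (by simp) ?_ (fun x _ => hderiv x) ?_ ?_
  · have : V (1 ^ 2) = N (1 ^ 2) := by simp only [V_def, N_def]; ring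
    simp only [this, one_mul]
    exact div_self (hNpos _ (by norm_num)).ne'
  · intro x hx
    have hV := hVx x
    have hN := hNpos (x ^ 2) (sq_nonneg x)
    refine ⟨by linarith [div_pos (mul_pos hx.1 hN) hV], (div_lt_one hV).2 ?_⟩
    have h := hP x ⟨hx.1.le, hx.2.le⟩
    have : V (x ^ 2) - x * N (x ^ 2) = (1 - x) * (1 - b * x + c * x ^ 2 - d * x ^ 3) ^ 2 := by
      simp only [V_def, N_def]; ring
    have : 0 < V (x ^ 2) - x * N (x ^ 2) := by
      rw [this]; exact mul_pos (by linarith [hx.2]) (by positivity)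
    linarith
  · intro x hx
    have hV := hVx x
    have hx2 : x ^ 2 < 1 := by nlinarith [hx.1, hx.2]
    have hW := hWpos x ⟨hx.1.le, hx.2.le⟩
    have hZ := hZpos (x ^ 2) ⟨sq_nonneg x, hx2.le⟩
    have h1 : 1 - (x * N (x ^ 2) / V (x ^ 2)) ^ 2 = (1 - x ^ 2) * (W (x ^ 2) / V (x ^ 2)) ^ 2 := by
      field_simp
      linear_combination hVN (x ^ 2)
    have h2 : 1 - α * (x * N (x ^ 2) / V (x ^ 2)) ^ 2
        = (1 - β * x ^ 2) * (Z (x ^ 2) / V (x ^ 2)) ^ 2 := by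
      field_simp
      linear_combination hVZ (x ^ 2) (pow_pos hx.1 2)
    have hβx : 0 < 1 - β * x ^ 2 := by nlinarith
    have hs1 := Real.sqrt_pos.2 (sub_pos.2 hx2)
    have hs2 := Real.sqrt_pos.2 hβx
    simp only [h1, h2]
    rw [Real.sqrt_mul (sub_nonneg.2 hx2.le), Real.sqrt_mul hβx.le,
      Real.sqrt_sq (div_pos hW hV).le, Real.sqrt_sq (div_pos hZ hV).le]
    field_simp

end SepticTransformation

section Parametrization

noncomputable def septicTrace (t : ℝ) : ℝ := (2 * t - 1) * (3 - 2 * t + 2 * t ^ 2)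

/-- The multiplier `K(α) / K(β)` of degree seven as a function of `t = (αβ)^{1/8}`. -/
noncomputable def septicMul (t : ℝ) : ℝ := septicTrace t + Real.sqrt (septicTrace t ^ 2 + 7)

noncomputable def septicBeta (t : ℝ) : ℝ := t * (1 - (1 - t) * (1 - t + t ^ 2) * septicMul t)

noncomputable def septicAlpha (t : ℝ) : ℝ :=
  t * (1 + (1 - t) * (1 - t + t ^ 2) * septicMul (1 - t))

theorem septicTrace_one_sub (t : ℝ) : septicTrace (1 - t) = -septicTrace t := by
  simp only [septicTrace]; ring

theorem septicMul_one_sub (t : ℝ) : septicMul (1 - t) = septicMul t - 2 * septicTrace t := by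
  simp only [septicMul, septicTrace_one_sub, neg_sq]; ring

theorem septicMul_sq (t : ℝ) : septicMul t ^ 2 = 2 * septicTrace t * septicMul t + 7 := by
  have := Real.sq_sqrt (show (0:ℝ) ≤ septicTrace t ^ 2 + 7 by positivity)
  simp only [septicMul]
  linear_combination this

theorem septicMul_pos (t : ℝ) : 0 < septicMul t := by
  have : |septicTrace t| < Real.sqrt (septicTrace t ^ 2 + 7) := by
    rw [← Real.sqrt_sq_eq_abs]
    exact Real.sqrt_lt_sqrt (sq_nonneg _) (by linarith)
  have := neg_abs_le (septicTrace t)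
  simp only [septicMul]
  linarith

theorem septicMul_mul (t : ℝ) : septicMul t * septicMul (1 - t) = 7 := by
  rw [septicMul_one_sub]
  linear_combination septicMul_sq t

theorem lt_septicMul {t x : ℝ} (h : x ^ 2 < 2 * septicTrace t * x + 7) : x < septicMul t := by
  by_contra! hx
  have h1 := septicMul_mul t
  have h2 := septicMul_pos t
  have h3 := septicMul_pos (1 - t)
  have h4 := septicMul_one_sub t
  have h5 : 0 ≤ (x - septicMul t) * (x + septicMul (1 - t)) :=
    mul_nonneg (sub_nonneg.2 hx) (by linarith)
  nlinarith

theorem septicMul_lt {t x : ℝ} (hx0 : 0 < x) (h : 2 * septicTrace t * x + 7 < x ^ 2) :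
    septicMul t < x := by
  by_contra! hx
  have h1 := septicMul_mul t
  have h3 := septicMul_pos (1 - t)
  have h4 := septicMul_one_sub t
  nlinarith [mul_nonneg (sub_nonneg.2 hx) (show 0 ≤ x + septicMul (1 - t) by linarith)]

theorem septicAlpha_one_sub (t : ℝ) : septicAlpha (1 - t) = 1 - septicBeta t := by
  simp only [septicAlpha, septicBeta, sub_sub_cancel]; ring

theorem septicBeta_one_sub (t : ℝ) : septicBeta (1 - t) = 1 - septicAlpha t := by
  simp only [septicAlpha, septicBeta, sub_sub_cancel]; ring

theorem septicAlpha_mul_septicBeta (t : ℝ) : septicAlpha t * septicBeta t = t ^ 8 := by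
  have h := septicMul_sq t
  simp only [septicAlpha, septicBeta, septicMul_one_sub]
  simp only [septicTrace] at h ⊢
  linear_combination (-(t ^ 2 * ((1 - t) * (1 - t + t ^ 2)) ^ 2)) * h

theorem mul_septicMul_lt_one {t : ℝ} (ht : t ∈ Ioo (0:ℝ) 1) :
    (1 - t) * (1 - t + t ^ 2) * septicMul t < 1 := by
  have h0 := ht.1
  have h1 : 0 < 1 - t := sub_pos.2 ht.2
  have : 7 * ((1 - t) * (1 - t + t ^ 2)) + 2 * septicTrace t < septicMul t := by
    apply lt_septicMul
    simp only [septicTrace]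
    linear_combination 7 * pow_pos h0 6
  have h2 := septicMul_sq t
  have h3 := septicMul_pos t
  nlinarith

theorem septicBeta_pos {t : ℝ} (ht : t ∈ Ioo (0:ℝ) 1) : 0 < septicBeta t :=
  mul_pos ht.1 (sub_pos.2 (mul_septicMul_lt_one ht))

theorem septicAlpha_pos {t : ℝ} (ht : t ∈ Ioo (0:ℝ) 1) : 0 < septicAlpha t := by
  have h1 : 0 < 1 - t := sub_pos.2 ht.2
  have h2 := septicMul_pos (1 - t)
  have h0 := ht.1
  simp only [septicAlpha]
  have : 0 < 1 - t + t ^ 2 := by positivity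
  positivity

theorem one_sub_mem {t : ℝ} (ht : t ∈ Ioo (0:ℝ) 1) : 1 - t ∈ Ioo (0:ℝ) 1 :=
  ⟨sub_pos.2 ht.2, by linarith [ht.1]⟩

theorem septicAlpha_mem {t : ℝ} (ht : t ∈ Ioo (0:ℝ) 1) : septicAlpha t ∈ Ioo (0:ℝ) 1 :=
  ⟨septicAlpha_pos ht, by linarith [septicBeta_pos (one_sub_mem ht), septicBeta_one_sub t]⟩

theorem septicBeta_mem {t : ℝ} (ht : t ∈ Ioo (0:ℝ) 1) : septicBeta t ∈ Ioo (0:ℝ) 1 :=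
  ⟨septicBeta_pos ht, by linarith [septicAlpha_pos (one_sub_mem ht), septicAlpha_one_sub t]⟩

theorem ellL_septicAlpha {t : ℝ} (ht : t ∈ Ioo (0:ℝ) 1) :
    ellL (septicAlpha t) = septicMul t * ellL (septicBeta t) := by
  have h0 := ht.1
  have h1 : 0 < 1 - t := sub_pos.2 ht.2
  have hm := septicMul_sq t
  have hmpos := septicMul_pos t
  have hd := sub_pos.2 (mul_septicMul_lt_one ht)
  have hαβ := septicAlpha_mul_septicBeta t
  have hα := septicAlpha_mem ht
  have hβ := septicBeta_mem ht
  have hβd : septicBeta t = t * (1 - (1 - t) * (1 - t + t ^ 2) * septicMul t) := rfl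
  have hm_one : 1 < septicMul t := by
    apply lt_septicMul
    simp only [septicTrace]
    have : 0 < t * (16 * (1 - t) + 4 * t + 8 * t ^ 2) := by positivity
    linear_combination this
  have hm_lower : 1 + 4 * t ^ 2 + 2 * t ^ 3 < septicMul t := by
    apply lt_septicMul
    simp only [septicTrace]
    have : 0 < t * (1 - t) ^ 2 * (16 * (1 - t) + 4 * t + 16 * t ^ 2 + 12 * t ^ 3) := by positivity
    linear_combination this
  have hm_upper : septicMul t < 1 + 2 * t + 2 * t ^ 2 + 2 * t ^ 3 := by
    apply septicMul_lt (by positivity)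
    simp only [septicTrace]
    have : 0 < t ^ 3 * (1 - t) * (8 * (1 - t) + 4 * t + 12 * t ^ 2) := by positivity
    linear_combination this
  have hαd : septicAlpha t * (1 - (1 - t) * (1 - t + t ^ 2) * septicMul t) = t ^ 7 := by
    apply mul_left_cancel₀ h0.ne'
    rw [hβd] at hαβ
    linear_combination hαβ
  generalize septicAlpha t = α at *
  generalize septicBeta t = β at *
  generalize septicMul t = m at *
  simp only [septicTrace] at hm
  have p2 : 0 < (m * (1 - 2 * t + 2 * t ^ 2) - 1) / 2 - 3 * (1 - (1 - t) * (1 - t + t ^ 2) * m) := by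
    nlinarith [mul_pos hmpos (sub_pos.2 hm_upper)]
  have p1 : 0 < (m - 1) / 2 - 2 * ((m * (1 - 2 * t + 2 * t ^ 2) - 1) / 2)
      + 3 * (1 - (1 - t) * (1 - t + t ^ 2) * m) := by
    nlinarith [mul_pos hmpos (sub_pos.2 hm_lower)]
  have key := ellL_eq_mul_of_septic (b := (m - 1) / 2) (c := (m * (1 - 2 * t + 2 * t ^ 2) - 1) / 2)
    (d := 1 - (1 - t) * (1 - t + t ^ 2) * m) h0 hα.1 hα.2 hβ.2 (by linarith) (by linarith) hd
    (by
      have : 0 < m * (1 - t) ^ 3 := by positivity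
      linear_combination this) p1 p2 hβd hαd (by ring)
    (by linear_combination (1 / 4 - t ^ 2 / 4) * hm)
    (by linear_combination (-1 / 4 + t / 4 + m * (1 / 4 - t / 2 + t ^ 2 / 2 - t ^ 3 / 4)) * hm)
    (by linear_combination (-3 / 4 + m * (3 / 4 - 5 / 4 * t + 3 / 2 * t ^ 2 - 3 / 4 * t ^ 3)) * hm)
    (by linear_combination (3 / 4 - t ^ 2 * m / 4) * hm)
  rw [key]
  ring

theorem mu_sqrt_septicBeta {t : ℝ} (ht : t ∈ Ioo (0:ℝ) 1) :
    mu (Real.sqrt (septicBeta t)) = 7 * mu (Real.sqrt (septicAlpha t)) := by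
  have h1 := ellL_septicAlpha ht
  have h2 := ellL_septicAlpha (one_sub_mem ht)
  rw [septicAlpha_one_sub, septicBeta_one_sub] at h2
  have h3 := ellL_pos (septicBeta_mem ht).2
  have hm := septicMul_pos t
  rw [mu_sqrt (septicBeta_mem ht), mu_sqrt (septicAlpha_mem ht), h1, h2, ← septicMul_mul t]
  field_simp

theorem exists_septicAlpha_eq {a : ℝ} (ha : a ∈ Ioo (0:ℝ) 1) :
    ∃ t ∈ Ioo (0:ℝ) 1, septicAlpha t = a := by
  have hc : ContinuousOn septicAlpha (Icc 0 1) := by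
    unfold septicAlpha septicMul septicTrace
    fun_prop
  have h0 : septicAlpha 0 = 0 := by simp [septicAlpha]
  have h1 : septicAlpha 1 = 1 := by simp [septicAlpha]
  exact intermediate_value_Ioo zero_le_one hc (by rwa [h0, h1])

end Parametrization

theorem modular_equation_order_seven (r : ℝ) (hr : r ∈ Set.Ioo (0:ℝ) 1) :
    (r^2 * (phi (1/7) r)^2) ^ ((1:ℝ)/8) +
      ((1 - r^2) * (1 - (phi (1/7) r)^2)) ^ ((1:ℝ)/8) = 1 := by
  have hr2 : r ^ 2 ∈ Ioo (0:ℝ) 1 := ⟨pow_pos hr.1 2, by nlinarith [hr.1, hr.2]⟩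
  obtain ⟨t, ht, hα⟩ := exists_septicAlpha_eq hr2
  have hβ := septicBeta_mem ht
  have hs : Real.sqrt (septicBeta t) ∈ Ioo (0:ℝ) 1 :=
    ⟨Real.sqrt_pos.2 hβ.1, by rw [Real.sqrt_lt' one_pos, one_pow]; exact hβ.2⟩
  have hphi : phi (1 / 7) r = Real.sqrt (septicBeta t) := by
    have h := mu_sqrt_septicBeta ht
    rw [hα, Real.sqrt_sq hr.1.le] at h
    rw [phi, if_neg hr.1.ne', if_neg hr.2.ne, ← muInv_mu hs, h]
    congr 1
    ring
  have h1 := septicAlpha_mul_septicBeta t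
  have h2 := septicAlpha_mul_septicBeta (1 - t)
  rw [septicAlpha_one_sub, septicBeta_one_sub, mul_comm] at h2
  have hroot : ∀ x : ℝ, 0 ≤ x → (x ^ 8) ^ ((1:ℝ) / 8) = x := fun x hx => by
    rw [← Real.rpow_natCast, ← Real.rpow_mul hx]
    norm_num
  rw [hphi, Real.sq_sqrt hβ.1.le, ← hα, h1, h2, hroot t ht.1.le,
    hroot (1 - t) (sub_nonneg.2 ht.2.le)]
  ring
end

section
/- For 0 < a ≤ 1/2 and r, s ∈ (0,1): μ_a(r) + μ_a(s) ≤ 2·μ_a(√(2rs/(1+rs+r's'))) ≤ 2·μ_a(√(rs)), where r' = √(1−r²), s' = √(1−s²), with equality when r = s. -/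
noncomputable def GaussF (a b c x : ℝ) : ℝ :=
  ∑' n : ℕ, ((ascPochhammer ℝ n).eval a * (ascPochhammer ℝ n).eval b /
    ((ascPochhammer ℝ n).eval c * n.factorial)) * x ^ n

noncomputable def muA (a r : ℝ) : ℝ :=
  (Real.pi / (2 * Real.sin (Real.pi * a))) *
    GaussF a (1-a) 1 (1 - r^2) / GaussF a (1-a) 1 (r^2)

open Set

/-- The Taylor coefficients at `0` of `F(a, 1 - a; 1; x)`. -/
noncomputable def zeroBalancedCoeff (a : ℝ) (n : ℕ) : ℝ :=
  (ascPochhammer ℝ n).eval a * (ascPochhammer ℝ n).eval (1 - a) /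
    ((ascPochhammer ℝ n).eval 1 * n.factorial)

/-- The power series with coefficients `c`, as a function on the reals. -/
noncomputable def powerSum (c : ℕ → ℝ) (x : ℝ) : ℝ := ∑' n, c n * x ^ n

section PowerSum

variable {c : ℕ → ℝ} {x : ℝ}

theorem summable_coeff_mul_pow (hc : ∀ n, |c n| ≤ 1) (hx : |x| < 1) :
    Summable fun n => c n * x ^ n := by
  refine Summable.of_norm_bounded (summable_geometric_of_lt_one (abs_nonneg x) hx) fun n => ?_
  rw [Real.norm_eq_abs, abs_mul, abs_pow]
  exact mul_le_of_le_one_left (by positivity) (hc n)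

theorem summable_nat_mul_coeff_mul_pow (hc : ∀ n, |c n| ≤ 1) (hx : |x| < 1) :
    Summable fun n : ℕ => n * c n * x ^ n := by
  have h := summable_pow_mul_geometric_of_norm_lt_one (R := ℝ) 1 (r := |x|) (by simpa using hx)
  refine Summable.of_norm_bounded h fun n => ?_
  rw [Real.norm_eq_abs, abs_mul, abs_mul, abs_pow, Nat.abs_cast, pow_one]
  gcongr
  exact mul_le_of_le_one_right (by positivity) (hc n)

theorem hasDerivAt_powerSum (hc : ∀ n, |c n| ≤ 1) (hx : |x| < 1) :
    HasDerivAt (powerSum c) (∑' n : ℕ, c n * (n * x ^ (n - 1))) x := by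
  obtain ⟨ρ, hxρ, hρ⟩ := exists_between hx
  have hρ0 : 0 < ρ := (abs_nonneg x).trans_lt hxρ
  have hu : Summable fun n : ℕ => (n : ℝ) * ρ ^ (n - 1) := by
    have h := summable_pow_mul_geometric_of_norm_lt_one (R := ℝ) 1 (r := ρ)
      (by rwa [Real.norm_eq_abs, abs_of_pos hρ0])
    refine (h.mul_right ρ⁻¹).congr fun n => ?_
    rcases n with _ | n
    · simp
    · simp only [Nat.add_sub_cancel, pow_succ]
      field_simp
  refine hasDerivAt_tsum_of_isPreconnected (t := Ioo (-ρ) ρ) (y₀ := 0)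
    (g := fun n y => c n * y ^ n) (g' := fun n y => c n * (n * y ^ (n - 1))) hu isOpen_Ioo
    isPreconnected_Ioo (fun n y _ => (hasDerivAt_pow n y).const_mul _) (fun n y hy => ?_)
    (by simpa using hρ0) (summable_coeff_mul_pow hc (by simp)) (abs_lt.1 hxρ)
  rw [Real.norm_eq_abs, abs_mul, abs_mul, abs_pow, Nat.abs_cast]
  refine (mul_le_of_le_one_left (by positivity) (hc n)).trans ?_
  gcongr
  exact (abs_lt.2 hy).le

theorem mul_deriv_powerSum (hc : ∀ n, |c n| ≤ 1) (hx : |x| < 1) :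
    x * deriv (powerSum c) x = ∑' n : ℕ, n * c n * x ^ n := by
  rw [(hasDerivAt_powerSum hc hx).deriv, ← tsum_mul_left]
  refine tsum_congr fun n => ?_
  rcases n with _ | n
  · simp
  · simp only [Nat.add_sub_cancel, pow_succ]
    ring

theorem deriv_powerSum (hc : ∀ n, |c n| ≤ 1) (hx : |x| < 1) :
    deriv (powerSum c) x = ∑' n : ℕ, (n + 1) * c (n + 1) * x ^ n := by
  rw [(hasDerivAt_powerSum hc hx).deriv]
  by_cases h : Summable fun n : ℕ => c n * (n * x ^ (n - 1))
  · rw [h.tsum_eq_zero_add]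
    simp only [Nat.cast_zero, zero_mul, mul_zero, zero_add, Nat.add_sub_cancel, Nat.cast_add,
      Nat.cast_one]
    exact tsum_congr fun n => by ring
  · rw [tsum_eq_zero_of_not_summable h, tsum_eq_zero_of_not_summable]
    intro h'
    refine h ((summable_nat_add_iff 1).1 (h'.congr fun n => ?_))
    simp only [Nat.add_sub_cancel, Nat.cast_add, Nat.cast_one]
    ring

end PowerSum

section Coefficients

variable {a : ℝ}

theorem zeroBalancedCoeff_zero : zeroBalancedCoeff a 0 = 1 := by
  simp [zeroBalancedCoeff]

theorem zeroBalancedCoeff_succ (n : ℕ) :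
    zeroBalancedCoeff a (n + 1) =
      zeroBalancedCoeff a n * ((n ^ 2 + n + a * (1 - a)) / (n + 1) ^ 2) := by
  have h1 : (ascPochhammer ℝ n).eval 1 ≠ 0 := (ascPochhammer_pos n 1 one_pos).ne'
  have h2 : (n.factorial : ℝ) ≠ 0 := by positivity
  have h3 : (n + 1 : ℝ) ≠ 0 := by positivity
  have h4 : (1 + n : ℝ) ≠ 0 := by positivity
  simp only [zeroBalancedCoeff, ascPochhammer_succ_eval, Nat.factorial_succ, Nat.cast_mul,
    Nat.cast_add, Nat.cast_one]
  field_simp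
  ring

theorem zeroBalancedCoeff_pos (ha : 0 < a) (ha1 : a < 1) (n : ℕ) : 0 < zeroBalancedCoeff a n := by
  have h1 := ascPochhammer_pos n a ha
  have h2 := ascPochhammer_pos n (1 - a) (by linarith)
  have h3 := ascPochhammer_pos n (1 : ℝ) one_pos
  unfold zeroBalancedCoeff
  positivity

theorem zeroBalancedCoeff_le_one (ha : 0 < a) (ha1 : a < 1) (n : ℕ) :
    zeroBalancedCoeff a n ≤ 1 := by
  induction n with
  | zero => exact zeroBalancedCoeff_zero.le
  | succ n ih =>
    rw [zeroBalancedCoeff_succ]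
    have h : (n ^ 2 + n + a * (1 - a) : ℝ) / (n + 1) ^ 2 ≤ 1 := by
      rw [div_le_one (by positivity)]
      nlinarith [(n.cast_nonneg : (0 : ℝ) ≤ n)]
    have h' : 0 ≤ a * (1 - a) := mul_nonneg ha.le (by linarith)
    exact mul_le_one₀ ih (by positivity) h

theorem abs_zeroBalancedCoeff_le_one (ha : 0 < a) (ha1 : a < 1) (n : ℕ) :
    |zeroBalancedCoeff a n| ≤ 1 := by
  rw [abs_of_pos (zeroBalancedCoeff_pos ha ha1 n)]
  exact zeroBalancedCoeff_le_one ha ha1 n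

theorem abs_zeroBalancedCoeff_div_le_one (ha : 0 < a) (ha1 : a < 1) (n : ℕ) :
    |zeroBalancedCoeff a n / (n + 1)| ≤ 1 := by
  have h := zeroBalancedCoeff_pos ha ha1 n
  rw [abs_of_pos (by positivity)]
  refine div_le_one_of_le₀ ((zeroBalancedCoeff_le_one ha ha1 n).trans ?_) (by positivity)
  simp

end Coefficients

/-- The function `x ↦ F(a, 1 - a; 1; x)`. -/
noncomputable def zeroBalancedF (a : ℝ) : ℝ → ℝ := powerSum (zeroBalancedCoeff a)

/-- The average of `zeroBalancedF a` over `[0, x]`. -/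
noncomputable def zeroBalancedAvg (a : ℝ) : ℝ → ℝ :=
  powerSum fun n => zeroBalancedCoeff a n / (n + 1)

section ZeroBalanced

variable {a x y : ℝ}

theorem muA_eq (a r : ℝ) :
    muA a r = Real.pi / (2 * Real.sin (Real.pi * a)) *
      (zeroBalancedF a (1 - r ^ 2) / zeroBalancedF a (r ^ 2)) :=
  mul_div_assoc _ _ _

theorem differentiableAt_zeroBalancedF (ha : 0 < a) (ha1 : a < 1) (hx : |x| < 1) :
    DifferentiableAt ℝ (zeroBalancedF a) x :=
  (hasDerivAt_powerSum (abs_zeroBalancedCoeff_le_one ha ha1) hx).differentiableAt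

theorem zeroBalancedF_pos (ha : 0 < a) (ha1 : a < 1) (hx : x ∈ Ico (0 : ℝ) 1) :
    0 < zeroBalancedF a x := by
  have hx1 : |x| < 1 := by rw [abs_of_nonneg hx.1]; exact hx.2
  refine (summable_coeff_mul_pow (abs_zeroBalancedCoeff_le_one ha ha1) hx1).tsum_pos
    (fun n => mul_nonneg (zeroBalancedCoeff_pos ha ha1 n).le (pow_nonneg hx.1 n)) 0 ?_
  simp [zeroBalancedCoeff_zero]

theorem zeroBalancedF_mono (ha : 0 < a) (ha1 : a < 1) (hx : 0 ≤ x) (hxy : x ≤ y) (hy : y < 1) :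
    zeroBalancedF a x ≤ zeroBalancedF a y := by
  have hc := abs_zeroBalancedCoeff_le_one ha ha1
  refine Summable.tsum_le_tsum (fun n => ?_)
    (summable_coeff_mul_pow hc (by rw [abs_of_nonneg hx]; linarith))
    (summable_coeff_mul_pow hc (by rw [abs_of_nonneg (hx.trans hxy)]; exact hy))
  have := (zeroBalancedCoeff_pos ha ha1 n).le
  gcongr

theorem zeroBalancedAvg_nonneg (ha : 0 < a) (ha1 : a < 1) (hx : 0 ≤ x) :
    0 ≤ zeroBalancedAvg a x :=
  tsum_nonneg fun n => by
    have := zeroBalancedCoeff_pos ha ha1 n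
    positivity

theorem zeroBalancedAvg_le (ha : 0 < a) (ha1 : a < 1) (hx : x ∈ Ico (0 : ℝ) 1) :
    zeroBalancedAvg a x ≤ zeroBalancedF a x := by
  have hx1 : |x| < 1 := by rw [abs_of_nonneg hx.1]; exact hx.2
  refine Summable.tsum_le_tsum (fun n => ?_)
    (summable_coeff_mul_pow (abs_zeroBalancedCoeff_div_le_one ha ha1) hx1)
    (summable_coeff_mul_pow (abs_zeroBalancedCoeff_le_one ha ha1) hx1)
  have := (zeroBalancedCoeff_pos ha ha1 n).le
  have hx0 := hx.1
  gcongr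
  exact div_le_self this (by simp)

theorem one_sub_mul_deriv_zeroBalancedF (ha : 0 < a) (ha1 : a < 1) (hx : |x| < 1) :
    (1 - x) * deriv (zeroBalancedF a) x = a * (1 - a) * zeroBalancedAvg a x := by
  have hc := abs_zeroBalancedCoeff_le_one ha ha1
  have h1 := deriv_powerSum hc hx
  have h2 := mul_deriv_powerSum hc hx
  have h3 : ∑' n : ℕ, (n + 1) * zeroBalancedCoeff a (n + 1) * x ^ n =
      ∑' n : ℕ, n * zeroBalancedCoeff a n * x ^ n + a * (1 - a) * zeroBalancedAvg a x := by
    rw [zeroBalancedAvg, powerSum, ← tsum_mul_left, ← Summable.tsum_add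
      (summable_nat_mul_coeff_mul_pow hc hx)
      ((summable_coeff_mul_pow (abs_zeroBalancedCoeff_div_le_one ha ha1) hx).mul_left _)]
    refine tsum_congr fun n => ?_
    rw [zeroBalancedCoeff_succ]
    have : (n + 1 : ℝ) ≠ 0 := by positivity
    field_simp
  rw [zeroBalancedF]
  linarith

theorem hasDerivAt_mul_zeroBalancedAvg (ha : 0 < a) (ha1 : a < 1) (hx : |x| < 1) :
    HasDerivAt (fun x => x * zeroBalancedAvg a x) (zeroBalancedF a x) x := by
  have hc := abs_zeroBalancedCoeff_div_le_one ha ha1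
  have hd : HasDerivAt (zeroBalancedAvg a) (deriv (zeroBalancedAvg a) x) x :=
    (hasDerivAt_powerSum hc hx).differentiableAt.hasDerivAt
  refine ((hasDerivAt_id x).mul hd).congr_deriv ?_
  have h2 : x * deriv (zeroBalancedAvg a) x = _ := mul_deriv_powerSum hc hx
  rw [id, h2, one_mul, zeroBalancedAvg, powerSum, ← Summable.tsum_add
    (summable_coeff_mul_pow hc hx) (summable_nat_mul_coeff_mul_pow hc hx)]
  refine tsum_congr fun n => ?_
  have : (n + 1 : ℝ) ≠ 0 := by positivity
  field_simp
  ring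

/-- The combination of `F` and its complementary function which Legendre's relation says is
constant. -/
noncomputable def legendreSum (a x : ℝ) : ℝ :=
  zeroBalancedF a x * ((1 - x) * zeroBalancedAvg a (1 - x)) +
    x * zeroBalancedAvg a x * zeroBalancedF a (1 - x)

theorem hasDerivAt_zeroBalancedF (ha : 0 < a) (ha1 : a < 1) (hx : x ∈ Ioo (0 : ℝ) 1) :
    HasDerivAt (zeroBalancedF a) (a * (1 - a) * zeroBalancedAvg a x / (1 - x)) x := by
  have hx1 : |x| < 1 := by rw [abs_of_pos hx.1]; exact hx.2
  refine (differentiableAt_zeroBalancedF ha ha1 hx1).hasDerivAt.congr_deriv ?_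
  rw [← one_sub_mul_deriv_zeroBalancedF ha ha1 hx1, mul_div_cancel_left₀]
  linarith [hx.2]

theorem hasDerivAt_zeroBalancedF_one_sub (ha : 0 < a) (ha1 : a < 1) (hx : x ∈ Ioo (0 : ℝ) 1) :
    HasDerivAt (fun x => zeroBalancedF a (1 - x))
      (-(a * (1 - a) * zeroBalancedAvg a (1 - x) / x)) x := by
  have h := hasDerivAt_zeroBalancedF ha ha1 (x := 1 - x) ⟨by linarith [hx.2], by linarith [hx.1]⟩
  simpa using h.comp_const_sub 1 x

theorem hasDerivAt_legendreSum (ha : 0 < a) (ha1 : a < 1) (hx : x ∈ Ioo (0 : ℝ) 1) :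
    HasDerivAt (legendreSum a) 0 x := by
  have hx1 : |x| < 1 := by rw [abs_of_pos hx.1]; exact hx.2
  have hx1' : |1 - x| < 1 := by rw [abs_of_pos] <;> linarith [hx.1, hx.2]
  have h1 : (1 - x) ≠ 0 := by linarith [hx.2]
  have h2 : x ≠ 0 := hx.1.ne'
  have hP := (hasDerivAt_mul_zeroBalancedAvg ha ha1 hx1').comp_const_sub 1 x
  refine (((hasDerivAt_zeroBalancedF ha ha1 hx).mul hP).add
    ((hasDerivAt_mul_zeroBalancedAvg ha ha1 hx1).mul
      (hasDerivAt_zeroBalancedF_one_sub ha ha1 hx))).congr_deriv ?_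
  field_simp
  ring

theorem legendreSum_eq (ha : 0 < a) (ha1 : a < 1) (hx : x ∈ Ioo (0 : ℝ) 1) :
    legendreSum a x = legendreSum a (1 / 2) :=
  isOpen_Ioo.is_const_of_deriv_eq_zero isPreconnected_Ioo
    (fun _ hy => (hasDerivAt_legendreSum ha ha1 hy).differentiableAt.differentiableWithinAt)
    (fun _ hy => (hasDerivAt_legendreSum ha ha1 hy).deriv) hx (by norm_num)

theorem legendreSum_nonneg (ha : 0 < a) (ha1 : a < 1) (hx : x ∈ Ioo (0 : ℝ) 1) :
    0 ≤ legendreSum a x := by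
  have h0 : 0 ≤ 1 - x := by linarith [hx.2]
  have h1 := (zeroBalancedF_pos ha ha1 (Ioo_subset_Ico_self hx)).le
  have h2 := (zeroBalancedF_pos (x := 1 - x) ha ha1 ⟨h0, by linarith [hx.1]⟩).le
  have h3 := zeroBalancedAvg_nonneg ha ha1 hx.1.le
  have h4 := zeroBalancedAvg_nonneg ha ha1 h0
  have := hx.1.le
  unfold legendreSum
  positivity

theorem hasDerivAt_zeroBalancedF_ratio (ha : 0 < a) (ha1 : a < 1) (hx : x ∈ Ioo (0 : ℝ) 1) :
    HasDerivAt (fun x => zeroBalancedF a (1 - x) / zeroBalancedF a x)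
      (-(a * (1 - a) * legendreSum a (1 / 2)) / (x * (1 - x) * zeroBalancedF a x ^ 2)) x := by
  have h1 : (1 - x) ≠ 0 := by linarith [hx.2]
  have h2 : x ≠ 0 := hx.1.ne'
  have h3 := (zeroBalancedF_pos ha ha1 (Ioo_subset_Ico_self hx)).ne'
  refine ((hasDerivAt_zeroBalancedF_one_sub ha ha1 hx).div
    (hasDerivAt_zeroBalancedF ha ha1 hx) h3).congr_deriv ?_
  rw [← legendreSum_eq ha ha1 hx, legendreSum]
  field_simp
  ring

theorem antitoneOn_sqrt_one_sub_mul_zeroBalancedF_sq (ha : 0 < a) (ha1 : a < 1) :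
    AntitoneOn (fun x => √(1 - x) * zeroBalancedF a x ^ 2) (Ioo 0 1) := by
  have hd : ∀ x ∈ Ioo (0 : ℝ) 1, HasDerivAt (fun x => √(1 - x) * zeroBalancedF a x ^ 2)
      (zeroBalancedF a x * (4 * (a * (1 - a)) * zeroBalancedAvg a x - zeroBalancedF a x) /
        (2 * √(1 - x))) x := by
    intro x hx
    have h1 : 0 < 1 - x := by linarith [hx.2]
    have h2 : HasDerivAt (fun x : ℝ => 1 - x) (-1) x := by
      simpa using (hasDerivAt_id x).const_sub 1
    refine ((h2.sqrt h1.ne').mul ((hasDerivAt_zeroBalancedF ha ha1 hx).pow 2)).congr_deriv ?_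
    obtain ⟨w, hw, hwx⟩ : ∃ w : ℝ, 0 < w ∧ 1 - x = w ^ 2 :=
      ⟨√(1 - x), Real.sqrt_pos.2 h1, (Real.sq_sqrt h1.le).symm⟩
    rw [hwx, Real.sqrt_sq hw.le, Pi.pow_apply]
    field_simp
    ring
  refine antitoneOn_of_deriv_nonpos (convex_Ioo 0 1)
    (fun x hx => (hd x hx).continuousAt.continuousWithinAt) ?_ ?_ <;> rw [interior_Ioo]
  · exact fun x hx => (hd x hx).differentiableAt.differentiableWithinAt
  · intro x hx
    rw [(hd x hx).deriv]
    have hF := zeroBalancedF_pos ha ha1 (Ioo_subset_Ico_self hx)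
    have hE := zeroBalancedAvg_nonneg ha ha1 hx.1.le
    have hEF := zeroBalancedAvg_le ha ha1 (Ioo_subset_Ico_self hx)
    have hq : 4 * (a * (1 - a)) ≤ 1 := by nlinarith [sq_nonneg (2 * a - 1)]
    have : 4 * (a * (1 - a)) * zeroBalancedAvg a x - zeroBalancedF a x ≤ 0 := by nlinarith
    exact div_nonpos_of_nonpos_of_nonneg (mul_nonpos_of_nonneg_of_nonpos hF.le this)
      (by positivity)

theorem one_div_cosh_sq_mem_Ioo {t : ℝ} (ht : 0 < t) : 1 / Real.cosh t ^ 2 ∈ Ioo (0 : ℝ) 1 := by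
  have h := Real.one_lt_cosh.2 ht.ne'
  refine ⟨by positivity, ?_⟩
  rw [div_lt_one (by positivity)]
  nlinarith

theorem concaveOn_zeroBalancedF_ratio_cosh (ha : 0 < a) (ha1 : a < 1) :
    ConcaveOn ℝ (Ioi 0) fun t => zeroBalancedF a (1 - 1 / Real.cosh t ^ 2) /
      zeroBalancedF a (1 / Real.cosh t ^ 2) := by
  have hL := legendreSum_nonneg ha ha1 (x := 1 / 2) (by norm_num)
  have hd : ∀ t ∈ Ioi (0 : ℝ), HasDerivAt (fun t => zeroBalancedF a (1 - 1 / Real.cosh t ^ 2) /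
      zeroBalancedF a (1 / Real.cosh t ^ 2)) (2 * (a * (1 - a) * legendreSum a (1 / 2)) /
        (√(1 - 1 / Real.cosh t ^ 2) * zeroBalancedF a (1 / Real.cosh t ^ 2) ^ 2)) t := by
    intro t ht
    have hc : 0 < Real.cosh t := Real.cosh_pos t
    have hs : 0 < Real.sinh t := Real.sinh_pos_iff.2 ht
    have hx := one_div_cosh_sq_mem_Ioo ht
    have hu : HasDerivAt (fun t => 1 / Real.cosh t ^ 2)
        (-(2 * Real.sinh t) / Real.cosh t ^ 3) t := by
      refine ((hasDerivAt_const t (1 : ℝ)).div ((Real.hasDerivAt_cosh t).pow 2)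
        (pow_pos hc 2).ne').congr_deriv ?_
      rw [Pi.pow_apply]
      field_simp
      ring
    have h1 : 1 - 1 / Real.cosh t ^ 2 = (Real.sinh t / Real.cosh t) ^ 2 := by
      have := Real.cosh_sq t
      field_simp
      linarith
    refine ((hasDerivAt_zeroBalancedF_ratio ha ha1 hx).comp t hu).congr_deriv ?_
    have h3 := (zeroBalancedF_pos ha ha1 (Ioo_subset_Ico_self hx)).ne'
    generalize zeroBalancedF a (1 / Real.cosh t ^ 2) = Y at h3 ⊢
    rw [h1, Real.sqrt_sq (by positivity)]
    field_simp
  refine AntitoneOn.concaveOn_of_deriv (convex_Ioi 0)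
    (fun t ht => (hd t ht).continuousAt.continuousWithinAt) ?_ ?_ <;> rw [interior_Ioi]
  · exact fun t ht => (hd t ht).differentiableAt.differentiableWithinAt
  · intro t ht u hu htu
    have hmt := one_div_cosh_sq_mem_Ioo ht
    have hmu := one_div_cosh_sq_mem_Ioo hu
    rw [(hd t ht).deriv, (hd u hu).deriv]
    have hle : 1 / Real.cosh u ^ 2 ≤ 1 / Real.cosh t ^ 2 := by
      have := Real.cosh_pos t
      have : Real.cosh t ≤ Real.cosh u := by
        rw [Real.cosh_le_cosh, abs_of_pos ht, abs_of_pos hu]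
        exact htu
      gcongr
    have hanti := antitoneOn_sqrt_one_sub_mul_zeroBalancedF_sq ha ha1 hmu hmt hle
    have h1 : 0 < 1 - 1 / Real.cosh t ^ 2 := by linarith [hmt.2]
    have h2 := zeroBalancedF_pos ha ha1 (Ioo_subset_Ico_self hmt)
    have h3 : 0 ≤ 1 - a := by linarith
    exact div_le_div_of_nonneg_left (by positivity) (by positivity) hanti

theorem pi_div_two_mul_sin_nonneg (ha : 0 < a) (ha1 : a < 1) :
    0 ≤ Real.pi / (2 * Real.sin (Real.pi * a)) := by
  have := Real.sin_pos_of_pos_of_lt_pi (x := Real.pi * a) (by positivity)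
    (by nlinarith [Real.pi_pos])
  positivity

theorem muA_anti (ha : 0 < a) (ha1 : a < 1) (hx : 0 < x) (hxy : x ≤ y) (hy : y < 1) :
    muA a y ≤ muA a x := by
  rw [muA_eq, muA_eq]
  have hsq : x ^ 2 ≤ y ^ 2 := by gcongr
  have hy1 : y ^ 2 < 1 := by nlinarith
  have hx0 : 0 < x ^ 2 := by positivity
  refine mul_le_mul_of_nonneg_left ?_ (pi_div_two_mul_sin_nonneg ha ha1)
  exact div_le_div₀ (zeroBalancedF_pos ha ha1 ⟨by linarith, by linarith⟩).le
    (zeroBalancedF_mono ha ha1 (by linarith) (by linarith) (by linarith))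
    (zeroBalancedF_pos ha ha1 ⟨by linarith, by linarith⟩)
    (zeroBalancedF_mono ha ha1 hx0.le hsq hy1)

theorem muA_one_div_cosh_add_le (ha : 0 < a) (ha1 : a < 1) (hx : 0 < x) (hy : 0 < y) :
    muA a (1 / Real.cosh x) + muA a (1 / Real.cosh y) ≤
      2 * muA a (1 / Real.cosh ((x + y) / 2)) := by
  have h := (concaveOn_zeroBalancedF_ratio_cosh ha ha1).2 hx hy (one_half_pos (α := ℝ)).le
    (one_half_pos (α := ℝ)).le (add_halves 1)
  have hmid : (1 / 2 : ℝ) * x + 1 / 2 * y = (x + y) / 2 := by ring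
  simp only [smul_eq_mul, hmid] at h
  have hk := mul_le_mul_of_nonneg_left h (pi_div_two_mul_sin_nonneg ha ha1)
  simp only [muA_eq, one_div_pow]
  linarith

end ZeroBalanced

theorem exists_one_div_cosh_eq {r : ℝ} (hr : r ∈ Ioo (0 : ℝ) 1) :
    ∃ t, 0 < t ∧ r = 1 / Real.cosh t ∧ √(1 - r ^ 2) = Real.sinh t / Real.cosh t := by
  have hr0 := hr.1
  have h1 : 0 < 1 - r ^ 2 := by nlinarith [hr.2]
  have hcosh : Real.cosh (Real.arsinh (√(1 - r ^ 2) / r)) = 1 / r := by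
    rw [Real.cosh_arsinh, div_pow, Real.sq_sqrt h1.le, Real.sqrt_eq_iff_mul_self_eq_of_pos]
    · field_simp
      ring
    · positivity
  refine ⟨Real.arsinh (√(1 - r ^ 2) / r), Real.arsinh_pos_iff.2 (by positivity), ?_, ?_⟩
  · rw [hcosh, one_div_one_div]
  · rw [hcosh, Real.sinh_arsinh]
    field_simp

theorem sqrt_mean_one_div_cosh (x y : ℝ) :
    √(2 * (1 / Real.cosh x) * (1 / Real.cosh y) / (1 + 1 / Real.cosh x * (1 / Real.cosh y) +
      Real.sinh x / Real.cosh x * (Real.sinh y / Real.cosh y))) =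
      1 / Real.cosh ((x + y) / 2) := by
  have hx := Real.cosh_pos x
  have hy := Real.cosh_pos y
  have hm := Real.cosh_pos ((x + y) / 2)
  have h1 := Real.cosh_add x y
  have h2 := Real.cosh_two_mul ((x + y) / 2)
  have h3 := Real.cosh_sq ((x + y) / 2)
  rw [mul_div_cancel₀ (x + y) two_ne_zero] at h2
  have hden : 1 + 1 / Real.cosh x * (1 / Real.cosh y) +
      Real.sinh x / Real.cosh x * (Real.sinh y / Real.cosh y) =
      2 * Real.cosh ((x + y) / 2) ^ 2 / (Real.cosh x * Real.cosh y) := by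
    field_simp
    linarith
  rw [hden, Real.sqrt_eq_iff_mul_self_eq_of_pos (by positivity)]
  field_simp


theorem muA_sum_le (a : ℝ) (ha : 0 < a) (ha2 : a ≤ 1/2)
    (r s : ℝ) (hr : r ∈ Set.Ioo (0:ℝ) 1) (hs : s ∈ Set.Ioo (0:ℝ) 1) :
    (muA a r + muA a s ≤
      2 * muA a (Real.sqrt (2*r*s / (1 + r*s + Real.sqrt (1-r^2) * Real.sqrt (1-s^2)))) ∧
     2 * muA a (Real.sqrt (2*r*s / (1 + r*s + Real.sqrt (1-r^2) * Real.sqrt (1-s^2)))) ≤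
      2 * muA a (Real.sqrt (r*s))) ∧
    (r = s →
      muA a r + muA a s =
        2 * muA a (Real.sqrt (2*r*s / (1 + r*s + Real.sqrt (1-r^2) * Real.sqrt (1-s^2)))) ∧
      2 * muA a (Real.sqrt (2*r*s / (1 + r*s + Real.sqrt (1-r^2) * Real.sqrt (1-s^2)))) =
        2 * muA a (Real.sqrt (r*s))) := by 
  have ha1 : a < 1 := by linarith
  have hr0 := hr.1
  have hs0 := hs.1
  have hr1 : r ^ 2 < 1 := by nlinarith [hr.2]
  have hs1 : s ^ 2 < 1 := by nlinarith [hs.2]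
  have hr' := Real.sq_sqrt (sub_nonneg.2 hr1.le)
  have hs' := Real.sq_sqrt (sub_nonneg.2 hs1.le)
  refine ⟨⟨?_, ?_⟩, ?_⟩
  · obtain ⟨x, hx, hrx, hrx'⟩ := exists_one_div_cosh_eq hr
    obtain ⟨y, hy, hsy, hsy'⟩ := exists_one_div_cosh_eq hs
    rw [hrx', hsy', hrx, hsy, sqrt_mean_one_div_cosh]
    exact muA_one_div_cosh_add_le ha ha1 hx hy
  · have hr'0 := Real.sqrt_pos.2 (sub_pos.2 hr1)
    have hs'0 := Real.sqrt_pos.2 (sub_pos.2 hs1)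
    set r' := √(1 - r ^ 2)
    set s' := √(1 - s ^ 2)
    have hrs : 0 < r * s := by positivity
    have hrs1 : r * s < 1 := by nlinarith
    have hle : r * s + r' * s' ≤ 1 := by
      nlinarith [sq_nonneg (r - s), sq_nonneg (r' - s')]
    refine mul_le_mul_of_nonneg_left (muA_anti ha ha1 (Real.sqrt_pos.2 hrs)
      (Real.sqrt_le_sqrt ?_) ?_) zero_le_two
    · rw [le_div_iff₀ (by positivity)]
      nlinarith
    · rw [Real.sqrt_lt' one_pos, one_pow, div_lt_one (by positivity)]
      nlinarith [mul_pos hr'0 hs'0]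
  · rintro rfl
    have hmean : √(2 * r * r / (1 + r * r + √(1 - r ^ 2) * √(1 - r ^ 2))) = r := by
      rw [← sq √(1 - r ^ 2), hr', Real.sqrt_eq_iff_mul_self_eq_of_pos hr0]
      ring
    rw [hmean, Real.sqrt_mul_self hr0.le]
    exact ⟨by ring, rfl⟩
end
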